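/- Let f, g ∈ H_a^∞ and define f(A) := (1/(2πi)) ∫_{Γ_{θ,ε}} f(λ) R(λ) dλ for any contour Γ_{θ,ε} ⊆ Σ_δ ∪ {z : |z| < r} (the integral converges absolutely in operator norm and is independent of the contour), and similarly g(A) and (f·g)(A), where (f·g)(λ) = f(λ) g(λ). Then (f·g)(A) = f(A) ∘ g(A). -/

import Mathlib

open Filter Topology MeasureTheory Set

noncomputable section

/-- Parametrization of the contour `Γ_{θ,ε}`: for `ε = 0` two rays
`t ↦ |t| e^{∓iθ}`, and for `ε > 0` the two rays `{ρ e^{±iθ} : ρ ≥ ε}` joined by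
the arc of the circle of radius `ε` through `-ε`, run from argument `-θ` to `θ`. -/
def gammaCurve (θ ε t : ℝ) : ℂ :=
  if t ≤ -ε then (-t : ℂ) * Complex.exp (-(θ : ℂ) * Complex.I)
  else if t < ε then
    (ε : ℂ) * Complex.exp (Complex.I * ((-(t * (Real.pi - θ) / ε) - Real.pi : ℝ) : ℂ))
  else (t : ℂ) * Complex.exp ((θ : ℂ) * Complex.I)

/-- The (piecewise) derivative of the parametrization `t ↦ gammaCurve θ ε t`. -/
def gammaDeriv (θ ε t : ℝ) : ℂ :=
  if t ≤ -ε then -Complex.exp (-(θ : ℂ) * Complex.I)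
  else if t < ε then
    -Complex.I * ((Real.pi - θ : ℝ) : ℂ) *
      Complex.exp (Complex.I * ((-(t * (Real.pi - θ) / ε) - Real.pi : ℝ) : ℂ))
  else Complex.exp ((θ : ℂ) * Complex.I)

/-- The open region to the right of the contour `Γ_{θ,ε}`. -/
def gammaPlus (θ ε : ℝ) : Set ℂ :=
  {w : ℂ | ∃ (t x : ℝ), 0 < x ∧ w = gammaCurve θ ε t + (x : ℂ)}

/-- The open region to the left of the contour `Γ_{θ,ε}`. -/
def gammaMinus (θ ε : ℝ) : Set ℂ :=
  {w : ℂ | ∃ (t x : ℝ), x < 0 ∧ w = gammaCurve θ ε t + (x : ℂ)}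

/-- The class `H_a^∞` of admissible holomorphic functions on the left half-plane. -/
structure MemHaInf (f : ℂ → ℂ) : Prop where
  holo : DifferentiableOn ℂ f {z : ℂ | z.re < 0}
  bdd : ∃ M : ℝ, ∀ z : ℂ, z.re < 0 → ‖f z‖ ≤ M
  lineIntPlus : ∀ x : ℝ, x ≤ 0 → ∀ θ : ℝ, Real.pi / 2 < θ → θ < Real.pi →
    IntegrableOn
      (fun r : ℝ => ‖f ((x : ℂ) + (r : ℂ) * Complex.exp ((θ : ℂ) * Complex.I))‖)
      (Set.Ioi 0)
  lineIntMinus : ∀ x : ℝ, x ≤ 0 → ∀ θ : ℝ, Real.pi / 2 < θ → θ < Real.pi →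
    IntegrableOn
      (fun r : ℝ => ‖f ((x : ℂ) + (r : ℂ) * Complex.exp (-(θ : ℂ) * Complex.I))‖)
      (Set.Ioi 0)

/-- The sector `Σ_δ = {λ ≠ 0 : |arg λ| < π/2 + δ}`. -/
def sigmaSet (δ : ℝ) : Set ℂ :=
  {z : ℂ | z ≠ 0 ∧ |Complex.arg z| < Real.pi / 2 + δ}

/-- The domain `Σ_δ ∪ {z : |z| < r}` of the pseudo-resolvent. -/
def resDom (δ r : ℝ) : Set ℂ := sigmaSet δ ∪ {z : ℂ | ‖z‖ < r}

variable {X : Type*} [NormedAddCommGroup X] [NormedSpace ℂ X] [CompleteSpace X]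

/-- A holomorphic pseudo-resolvent on `Σ_δ ∪ {|z| < r}` with the bound
`‖R(λ)‖ ≤ C/|λ|` on `Σ_δ`, bounded near `0`. -/
structure IsPseudoResolvent (R : ℂ → X →L[ℂ] X) (δ r C : ℝ) : Prop where
  hδ0 : 0 < δ
  hδ : δ < Real.pi / 2
  hr : 0 < r
  hC : 0 < C
  pseudo : ∀ lam mu : ℂ, lam ∈ resDom δ r → mu ∈ resDom δ r →
    R lam - R mu = (mu - lam) • (R lam).comp (R mu)
  holo : DifferentiableOn ℂ R (resDom δ r)
  bound : ∀ lam ∈ sigmaSet δ, ‖R lam‖ ≤ C / ‖lam‖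
  boundBall : ∃ M : ℝ, ∀ z : ℂ, ‖z‖ < r → ‖R z‖ ≤ M

section StripLemmas
set_option linter.unusedSectionVars false
variable {E : Type*} [NormedAddCommGroup E] [NormedSpace ℂ E]

lemma int_exp_neg_abs : Integrable (fun x : ℝ => Real.exp (-|x|)) := by
  rw [← integrableOn_univ, ← Iic_union_Ioi (a := (0:ℝ)), integrableOn_union]
  constructor
  · refine (integrableOn_exp_Iic 0).congr_fun (fun x hx => ?_) measurableSet_Iic
    simp only [abs_of_nonpos (show x ≤ 0 from hx), neg_neg]
  · refine (integrableOn_exp_neg_Ioi 0).congr_fun (fun x hx => ?_) measurableSet_Ioi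
    simp only [abs_of_pos (show 0 < x from hx)]

lemma integrable_of_cont_decay {h : ℝ → E} (hc : Continuous h) {K x0 : ℝ}
    (hb : ∀ x, x0 ≤ |x| → ‖h x‖ ≤ K * Real.exp (-|x|)) : Integrable h := by
  have hi : Integrable (fun x : ℝ => K * Real.exp (-|x|)) := int_exp_neg_abs.const_mul K
  refine hc.locallyIntegrable.integrable_of_isBigO_atBot_atTop (g := fun x : ℝ => K * Real.exp (-|x|))
    (g' := fun x : ℝ => K * Real.exp (-|x|)) ?_ (hi.integrableAtFilter _) ?_ (hi.integrableAtFilter _)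
  · refine Asymptotics.IsBigO.of_bound 1 ?_
    filter_upwards [eventually_le_atBot (-|x0|)] with x hx
    have : x0 ≤ |x| := by
      have := le_abs_self x0; have := neg_abs_le x; linarith
    rw [one_mul]; exact (hb x this).trans (le_abs_self _)
  · refine Asymptotics.IsBigO.of_bound 1 ?_
    filter_upwards [eventually_ge_atTop (|x0|)] with x hx
    have : x0 ≤ |x| := by
      have := le_abs_self x0; have := le_abs_self x; linarith
    rw [one_mul]; exact (hb x this).trans (le_abs_self _)

lemma cont_line {G : ℂ → E} {s : Set ℂ} (hG : ContinuousOn G s) {y : ℝ}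
    (hy : ∀ x : ℝ, (x : ℂ) + y * Complex.I ∈ s) :
    Continuous (fun x : ℝ => G (x + y * Complex.I)) :=
  hG.comp_continuous (by fun_prop) hy

lemma exp_neg_abs_tendsto : Tendsto (fun x : ℝ => Real.exp (-|x|)) atTop (𝓝 0) :=
  Real.tendsto_exp_atBot.comp (tendsto_neg_atTop_atBot.comp tendsto_abs_atTop_atTop)

lemma side_tendsto {G : ℂ → E} {y1 y2 : ℝ} {K x0 : ℝ}
    (hb : ∀ x y : ℝ, x0 ≤ |x| → y ∈ uIcc y1 y2 →
      ‖G (x + y * Complex.I)‖ ≤ K * Real.exp (-|x|)) {l : Filter ℝ} {u : ℝ → ℝ}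
    (hu : Tendsto (fun n => |u n|) l atTop) :
    Tendsto (fun n : ℝ => ∫ y in y1..y2, G (u n + y * Complex.I)) l (𝓝 0) := by
  have h1 : Tendsto (fun n : ℝ => K * Real.exp (-|u n|) * |y2 - y1|) l (𝓝 0) := by
    have : Tendsto (fun n : ℝ => Real.exp (-|u n|)) l (𝓝 0) :=
      Real.tendsto_exp_atBot.comp (tendsto_neg_atTop_atBot.comp hu)
    simpa using (this.const_mul K).mul_const |y2 - y1|
  refine squeeze_zero_norm' ?_ h1
  filter_upwards [hu.eventually (eventually_ge_atTop x0)] with n hn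
  exact intervalIntegral.norm_integral_le_of_norm_le_const fun y hy =>
    hb _ _ hn (uIoc_subset_uIcc hy)

lemma strip_lemma [CompleteSpace E] {G : ℂ → E} {y1 y2 : ℝ} {K x0 : ℝ}
    (hG : DifferentiableOn ℂ G {w : ℂ | w.im ∈ uIcc y1 y2})
    (hb : ∀ x y : ℝ, x0 ≤ |x| → y ∈ uIcc y1 y2 →
      ‖G (x + y * Complex.I)‖ ≤ K * Real.exp (-|x|)) :
    ∫ x : ℝ, G (x + y1 * Complex.I) = ∫ x : ℝ, G (x + y2 * Complex.I) := by
  have i1 : Integrable (fun x : ℝ => G (x + y1 * Complex.I)) :=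
    integrable_of_cont_decay (cont_line hG.continuousOn (by intro x; simp))
      (fun x hx => hb x y1 hx (by simp))
  have i2 : Integrable (fun x : ℝ => G (x + y2 * Complex.I)) :=
    integrable_of_cont_decay (cont_line hG.continuousOn (by intro x; simp))
      (fun x hx => hb x y2 hx (by simp))
  have t1 := intervalIntegral_tendsto_integral i1 tendsto_neg_atTop_atBot tendsto_id
  have t2 := intervalIntegral_tendsto_integral i2 tendsto_neg_atTop_atBot tendsto_id
  have t3 := (side_tendsto hb (l := atTop) (u := fun n => n) tendsto_abs_atTop_atTop).const_smul
    Complex.I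
  have t4 := (side_tendsto hb (l := atTop) (u := fun n => -n)
    (by simpa using tendsto_abs_atTop_atTop)).const_smul Complex.I
  have := ((t1.sub t2).add t3).sub t4
  have h0 : ∀ n : ℝ, _ := fun n : ℝ => Complex.integral_boundary_rect_eq_zero_of_differentiableOn G
    ((-n : ℝ) + y1 * Complex.I) ((n : ℝ) + y2 * Complex.I)
    (hG.mono fun w hw => by
      have := hw.2
      simpa using this)
  have h1 := tendsto_nhds_unique (this.congr (fun n => by simpa using h0 n)) tendsto_const_nhds
  simpa [sub_eq_zero] using h1

lemma half_strip_lemma [CompleteSpace E] {G : ℂ → E} {y1 y2 b : ℝ} {K x0 : ℝ}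
    (hG : DifferentiableOn ℂ G {w : ℂ | w.re ≤ b ∧ w.im ∈ uIcc y1 y2})
    (hb : ∀ x y : ℝ, x ≤ b → x0 ≤ |x| → y ∈ uIcc y1 y2 →
      ‖G (x + y * Complex.I)‖ ≤ K * Real.exp (-|x|))
    (i1 : IntegrableOn (fun x : ℝ => G (x + y1 * Complex.I)) (Iic b))
    (i2 : IntegrableOn (fun x : ℝ => G (x + y2 * Complex.I)) (Iic b)) :
    (∫ x : ℝ in Iic b, G (x + y1 * Complex.I)) - (∫ x : ℝ in Iic b, G (x + y2 * Complex.I))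
      + Complex.I • (∫ y in y1..y2, G (b + y * Complex.I)) = 0 := by
  have t1 := intervalIntegral_tendsto_integral_Iic b i1 tendsto_neg_atTop_atBot
  have t2 := intervalIntegral_tendsto_integral_Iic b i2 tendsto_neg_atTop_atBot
  have t3 : Tendsto (fun _ : ℝ => Complex.I • (∫ y in y1..y2, G (b + y * Complex.I))) atTop
    (𝓝 _) := tendsto_const_nhds
  have t4 : Tendsto (fun n : ℝ => Complex.I • ∫ y in y1..y2, G ((-n : ℝ) + y * Complex.I)) atTop
      (𝓝 (Complex.I • (0 : E))) := by
    have h1 : Tendsto (fun n : ℝ => K * Real.exp (-|-n|) * |y2 - y1|) atTop (𝓝 0) := by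
      simpa using (exp_neg_abs_tendsto.const_mul K).mul_const |y2 - y1|
    refine (squeeze_zero_norm' ?_ h1).const_smul _
    filter_upwards [eventually_ge_atTop x0, eventually_ge_atTop (-b)] with n hn hn'
    exact intervalIntegral.norm_integral_le_of_norm_le_const fun y hy =>
      hb _ _ (by linarith) (by rw [abs_neg]; exact hn.trans (le_abs_self _)) (uIoc_subset_uIcc hy)
  have := ((t1.sub t2).add t3).sub t4
  have h0 : ∀ᶠ n : ℝ in atTop, _ := (eventually_ge_atTop (-b)).mono fun n hn =>
    Complex.integral_boundary_rect_eq_zero_of_differentiableOn G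
    ((-n : ℝ) + y1 * Complex.I) ((b : ℝ) + y2 * Complex.I)
    (hG.mono fun w hw => by
      have h2 := hw.2
      have h1 := hw.1
      refine ⟨?_, by simpa using h2⟩
      have : w.re ∈ uIcc (-n) b := by simpa using h1
      rw [uIcc_of_le (by linarith)] at this
      exact this.2)
  have h1 := tendsto_nhds_unique (this.congr' (h0.mono fun n hn => by simpa using hn)) tendsto_const_nhds
  simpa using h1

lemma inv_line_tendsto {s : ℝ} (hs : s ≠ 0) (a : ℝ) :
    Tendsto (fun n : ℝ => ∫ x in (a - n)..(a + n), ((x : ℂ) - a + s * Complex.I)⁻¹) atTop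
      (𝓝 (-(s / |s| : ℝ) * Real.pi * Complex.I)) := by
  have h1 : ∀ n : ℝ, ∫ x in (a - n)..(a + n), ((x : ℂ) - a + s * Complex.I)⁻¹ =
      ((-2 * Real.arctan (n / s) : ℝ) : ℂ) * Complex.I := by
    intro n
    have e1 : ∫ x in (a - n)..(a + n), ((x : ℂ) - a + s * Complex.I)⁻¹ =
        ∫ x in (-n)..n, ((x : ℂ) + s * Complex.I)⁻¹ := by
      have := intervalIntegral.integral_comp_sub_right (a := a - n) (b := a + n)
        (fun x : ℝ => ((x : ℂ) + s * Complex.I)⁻¹) a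
      simpa using this
    have hne : ∀ x : ℝ, (x : ℂ) + s * Complex.I ≠ 0 := by
      intro x hx
      have := congrArg Complex.im hx
      simp at this; exact hs this
    have hci : ∀ p q : ℝ, IntervalIntegrable (fun x : ℝ => ((x : ℂ) + s * Complex.I)⁻¹) volume p q :=
      fun p q => (Continuous.inv₀ (by fun_prop) hne).intervalIntegrable _ _
    have e2 : ∫ x in (-n)..n, ((x : ℂ) + s * Complex.I)⁻¹ =
      ∫ x in (-n)..n, (((-x : ℝ) : ℂ) + s * Complex.I)⁻¹ := by
      have := intervalIntegral.integral_comp_neg (a := -n) (b := n)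
        (fun x : ℝ => ((x : ℂ) + s * Complex.I)⁻¹)
      simpa using this.symm
    have hci2 : IntervalIntegrable (fun x : ℝ => (((-x : ℝ) : ℂ) + s * Complex.I)⁻¹) volume (-n) n :=
      (Continuous.inv₀ (by fun_prop) (fun x => hne (-x))).intervalIntegrable _ _
    have e3 : 2 * ∫ x in (-n)..n, ((x : ℂ) + s * Complex.I)⁻¹ =
        ∫ x in (-n)..n, (-2 * s * Complex.I) * (((s ^ 2 + x ^ 2)⁻¹ : ℝ) : ℂ) := by
      rw [two_mul]
      nth_rewrite 2 [e2]
      rw [← intervalIntegral.integral_add (hci _ _) hci2]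
      refine intervalIntegral.integral_congr fun x _ => ?_
      have h1 := hne x
      have h2 := hne (-x)
      have h3 : ((s : ℂ) ^ 2 + x ^ 2) ≠ 0 := by
        have : 0 < s ^ 2 + x ^ 2 := by positivity
        exact_mod_cast this.ne'
      have h4 : -(x : ℂ) + s * Complex.I ≠ 0 := by simpa using h2
      have h5 : ((x : ℂ) + s * Complex.I) * (-(x : ℂ) + s * Complex.I) = -((s : ℂ) ^ 2 + x ^ 2) := by
        linear_combination (s:ℂ)^2 * Complex.I_sq
      push_cast
      rw [inv_add_inv h1 h4, h5]
      field_simp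
      ring
    rw [e1]
    rw [intervalIntegral.integral_const_mul, intervalIntegral.integral_ofReal, integral_inv_sq_add_sq hs] at e3
    have hsc : (s : ℂ) ≠ 0 := by exact_mod_cast hs
    rw [neg_div, Real.arctan_neg] at e3
    push_cast at e3 ⊢
    have : (2 : ℂ) ≠ 0 := two_ne_zero
    apply mul_left_cancel₀ this
    rw [e3]
    field_simp
    ring
  simp_rw [h1]
  have h2 : Tendsto (fun n : ℝ => (-2 * Real.arctan (n / s) : ℝ)) atTop (𝓝 (-(s / |s|) * Real.pi)) := by
    rcases lt_or_gt_of_ne hs with h | h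
    · have : Tendsto (fun n : ℝ => n / s) atTop atBot := tendsto_id.atTop_div_const_of_neg h
      have := ((Real.tendsto_arctan_atBot.mono_right nhdsWithin_le_nhds).comp this).const_mul (-2)
      have e : -(s / |s|) * Real.pi = -2 * -(Real.pi / 2) := by
        rw [abs_of_neg h]; field_simp
      rw [e]; exact this
    · have : Tendsto (fun n : ℝ => n / s) atTop atTop := tendsto_id.atTop_div_const h
      have := ((Real.tendsto_arctan_atTop.mono_right nhdsWithin_le_nhds).comp this).const_mul (-2)
      have e : -(s / |s|) * Real.pi = -2 * (Real.pi / 2) := by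
        rw [abs_of_pos h]; field_simp
      rw [e]; exact this
  have := ((Complex.continuous_ofReal.tendsto _).comp h2).mul_const Complex.I
  simpa using this

lemma pole_lemma {P F : ℂ → ℂ} {a b y1 y2 : ℝ} {w0 : ℂ} {K x0 : ℝ}
    (hP : DifferentiableOn ℂ P {w : ℂ | w.im ∈ Ioo a b})
    (ha : a < y1) (h1 : y1 < w0.im) (h2 : w0.im < y2) (hb' : y2 < b)
    (hF : ∀ w : ℂ, w.im ∈ Ioo a b → w ≠ w0 → F w = P w / (w - w0))
    (hb : ∀ x y : ℝ, x0 ≤ |x| → y ∈ Icc y1 y2 →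
      ‖F (x + y * Complex.I)‖ ≤ K * Real.exp (-|x|)) :
    (∫ x : ℝ, F (x + y1 * Complex.I)) - ∫ x : ℝ, F (x + y2 * Complex.I) =
      2 * Real.pi * Complex.I * P w0 := by
  have hop : IsOpen {w : ℂ | w.im ∈ Ioo a b} := isOpen_Ioo.preimage Complex.continuous_im
  have hw0 : w0 ∈ {w : ℂ | w.im ∈ Ioo a b} := ⟨by linarith, by linarith⟩
  have hD : DifferentiableOn ℂ (dslope P w0) {w : ℂ | w.im ∈ Ioo a b} :=
    (Complex.differentiableOn_dslope (hop.mem_nhds hw0)).2 hP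
  have hFD : ∀ w : ℂ, w.im ∈ Ioo a b → w ≠ w0 → dslope P w0 w = F w - P w0 * (w - w0)⁻¹ := by
    intro w hw hne
    rw [dslope_of_ne _ hne, hF w hw hne, slope_def_field, sub_div, div_eq_mul_inv (P w0)]
  have hFc : ∀ y : ℝ, y ∈ Ioo a b → y ≠ w0.im → Continuous (fun x : ℝ => F (x + y * Complex.I)) := by
    intro y hy hne
    have hne' : ∀ x : ℝ, (x : ℂ) + y * Complex.I ≠ w0 := by
      intro x hx; apply hne; rw [← hx]; simp
    have : (fun x : ℝ => F (x + y * Complex.I)) =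
      fun x : ℝ => P (x + y * Complex.I) / (x + y * Complex.I - w0) := by
      funext x; exact hF _ (by simpa using hy) (hne' x)
    rw [this]
    exact (cont_line hP.continuousOn (by intro x; simpa using hy)).div (by fun_prop)
      (fun x => sub_ne_zero.2 (hne' x))
  have c1 := hFc y1 ⟨ha, by linarith⟩ h1.ne
  have c2 := hFc y2 ⟨by linarith, hb'⟩ h2.ne'
  have hy12 : y1 ≤ y2 := by linarith
  have i1 := integrable_of_cont_decay c1 (fun x hx => hb x y1 hx ⟨le_rfl, hy12⟩)
  have i2 := integrable_of_cont_decay c2 (fun x hx => hb x y2 hx ⟨hy12, le_rfl⟩)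
  have ta : Tendsto (fun n : ℝ => w0.re - n) atTop atBot := tendsto_atBot_add_const_left _ w0.re tendsto_neg_atTop_atBot
  have tb : Tendsto (fun n : ℝ => w0.re + n) atTop atTop := tendsto_atTop_add_const_left _ _ tendsto_id
  have t1 := intervalIntegral_tendsto_integral i1 ta tb
  have t2 := intervalIntegral_tendsto_integral i2 ta tb
  rw [← uIcc_of_le hy12] at hb
  have t3 := (side_tendsto hb (l := atTop) (u := fun n => w0.re + n)
    (tendsto_abs_atTop_atTop.comp tb)).const_smul Complex.I
  have t4 := (side_tendsto hb (l := atTop) (u := fun n => w0.re - n)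
    (tendsto_abs_atBot_atTop.comp ta)).const_smul Complex.I
  have s1 := (inv_line_tendsto (s := y1 - w0.im) (sub_ne_zero.2 h1.ne) w0.re).const_mul (P w0)
  have s2 := (inv_line_tendsto (s := y2 - w0.im) (sub_ne_zero.2 h2.ne') w0.re).const_mul (P w0)
  have hinv : ∀ u : ℝ → ℝ, Tendsto (fun n => |u n - w0.re|) atTop atTop → 
    Tendsto (fun n : ℝ => ∫ y in y1..y2, ((u n : ℂ) + y * Complex.I - w0)⁻¹) atTop (𝓝 0) := by
    intro u hu
    have h1 : Tendsto (fun n : ℝ => |u n - w0.re|⁻¹ * |y2 - y1|) atTop (𝓝 0) := by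
      simpa using (tendsto_inv_atTop_zero.comp hu).mul_const |y2 - y1|
    refine squeeze_zero_norm' ?_ h1
    filter_upwards [hu.eventually (eventually_gt_atTop 0)] with n hn
    refine intervalIntegral.norm_integral_le_of_norm_le_const fun y hy => ?_
    rw [norm_inv]
    apply inv_anti₀ hn
    have := Complex.abs_re_le_norm ((u n : ℂ) + y * Complex.I - w0)
    simpa using this
  have s3 := ((hinv (fun n => w0.re + n) (by simpa using tendsto_abs_atTop_atTop)).const_mul (P w0)).const_smul Complex.I
  have s4 := ((hinv (fun n => w0.re - n) (by simpa using tendsto_abs_atTop_atTop)).const_mul (P w0)).const_smul Complex.I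
  have tot := (((t1.sub s1).sub (t2.sub s2)).add (t3.sub s3)).sub (t4.sub s4)
  have h0 : ∀ n : ℝ, _ := fun n : ℝ => Complex.integral_boundary_rect_eq_zero_of_differentiableOn (dslope P w0)
    ((w0.re - n : ℝ) + y1 * Complex.I) ((w0.re + n : ℝ) + y2 * Complex.I)
    (hD.mono fun w hw => by
      have h2 := hw.2
      have h3 : w.im ∈ uIcc y1 y2 := by simpa using h2
      rw [uIcc_of_le hy12] at h3
      exact ⟨by linarith [h3.1], by linarith [h3.2]⟩)
  have hinvc : ∀ y : ℝ, y ≠ w0.im → Continuous (fun x : ℝ => ((x : ℂ) + y * Complex.I - w0)⁻¹) := by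
    intro y hy
    refine Continuous.inv₀ (by fun_prop) fun x hx => hy ?_
    have := congrArg Complex.im hx
    simp at this; linarith
  have hline : ∀ y : ℝ, y ∈ Ioo a b → y ≠ w0.im → ∀ p q : ℝ,
      ∫ x in p..q, dslope P w0 (x + y * Complex.I) = (∫ x in p..q, F (x + y * Complex.I)) -
        P w0 * ∫ x in p..q, ((x : ℂ) - w0.re + (y - w0.im : ℝ) * Complex.I)⁻¹ := by
    intro y hy hne p q
    have e : ∀ x : ℝ, (x : ℂ) - w0.re + (y - w0.im : ℝ) * Complex.I = x + y * Complex.I - w0 := by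
      intro x; apply Complex.ext <;> simp
    simp_rw [e]
    rw [← intervalIntegral.integral_const_mul, ← intervalIntegral.integral_sub]
    · refine intervalIntegral.integral_congr fun x _ => hFD _ (by simpa using hy) ?_
      intro hx; apply hne; rw [← hx]; simp
    · exact (hFc y hy hne).intervalIntegrable _ _
    · exact (continuous_const.mul (hinvc y hne)).intervalIntegrable _ _
  have hvert : ∀ x : ℝ, x ≠ w0.re → 
      ∫ y in y1..y2, dslope P w0 (x + y * Complex.I) = (∫ y in y1..y2, F (x + y * Complex.I)) -
        P w0 * ∫ y in y1..y2, ((x : ℂ) + y * Complex.I - w0)⁻¹ := by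
    intro x hne
    have hne' : ∀ y : ℝ, (x : ℂ) + y * Complex.I ≠ w0 := by
      intro y hx; apply hne; rw [← hx]; simp
    have hci : Continuous (fun y : ℝ => ((x : ℂ) + y * Complex.I - w0)⁻¹) :=
      Continuous.inv₀ (by fun_prop) fun y => sub_ne_zero.2 (hne' y)
    have him : ∀ y ∈ uIcc y1 y2, ((x : ℂ) + y * Complex.I).im ∈ Ioo a b := by
      intro y hy
      rw [uIcc_of_le hy12] at hy
      simp only [Complex.add_im, Complex.ofReal_im, Complex.mul_im, Complex.ofReal_re, Complex.I_im, Complex.I_re]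
      constructor <;> linarith [hy.1, hy.2]
    rw [← intervalIntegral.integral_const_mul, ← intervalIntegral.integral_sub]
    · refine intervalIntegral.integral_congr fun y hy => hFD _ (him y hy) (hne' y)
    · apply ContinuousOn.intervalIntegrable
      have : ContinuousOn (fun y : ℝ => P (x + y * Complex.I) / (x + y * Complex.I - w0)) (uIcc y1 y2) := by
        refine ContinuousOn.div ?_ (by fun_prop) (fun y _ => sub_ne_zero.2 (hne' y))
        exact hP.continuousOn.comp (f := fun y : ℝ => (x : ℂ) + y * Complex.I) (by fun_prop) him
      exact this.congr fun y hy => hF _ (him y hy) (hne' y)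
    · exact (continuous_const.mul hci).intervalIntegrable _ _
  have hfin := tendsto_nhds_unique (tot.congr' ((eventually_gt_atTop 0).mono fun n hn => by
    have h := h0 n
    simp only [Complex.add_re, Complex.ofReal_re, Complex.mul_re, Complex.I_re, Complex.ofReal_im, Complex.I_im,
      Complex.add_im, Complex.mul_im, mul_zero, mul_one, add_zero, zero_add, sub_zero] at h
    rw [hline y1 ⟨ha, by linarith⟩ h1.ne, hline y2 ⟨by linarith, hb'⟩ h2.ne', hvert _ (by linarith), hvert _ (by linarith)] at h
    simp only [smul_sub] at h
    exact h)) tendsto_const_nhds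
  have e1 : |y1 - w0.im| = -(y1 - w0.im) := abs_of_neg (by linarith)
  have e2 : |y2 - w0.im| = (y2 - w0.im) := abs_of_pos (by linarith)
  rw [e1, e2, div_neg, div_self (by linarith), div_self (by linarith)] at hfin
  simp at hfin
  linear_combination hfin

end StripLemmas
section FubiniCore
set_option linter.unusedSectionVars false

/-- The integrable weight `|t|^{-1/2} / (1 + t²)`. -/
def wtTwo (t : ℝ) : ℝ := (√|t|)⁻¹ * (1 + t ^ 2)⁻¹

lemma wtTwo_nonneg (t : ℝ) : 0 ≤ wtTwo t := by unfold wtTwo; positivity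

lemma wtTwo_measurable : Measurable wtTwo := by unfold wtTwo; fun_prop

lemma wtTwo_integrable : Integrable wtTwo := by
  have h1 : IntegrableOn wtTwo (Ioc 0 1) := by
    have : IntegrableOn (fun x : ℝ => x ^ (-(1/2) : ℝ)) (Ioc 0 1) := by
      have := intervalIntegral.intervalIntegrable_rpow' (a := 0) (b := 1) (r := -(1/2)) (by norm_num)
      rwa [intervalIntegrable_iff_integrableOn_Ioc_of_le zero_le_one] at this
    refine this.mono' wtTwo_measurable.aestronglyMeasurable ?_
    filter_upwards [ae_restrict_mem measurableSet_Ioc] with x hx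
    rw [Real.norm_of_nonneg (wtTwo_nonneg x), wtTwo, abs_of_pos hx.1, Real.rpow_neg hx.1.le,
      ← Real.sqrt_eq_rpow]
    have : (1 + x ^ 2)⁻¹ ≤ 1 := inv_le_one_of_one_le₀ (by nlinarith [sq_nonneg x])
    exact mul_le_of_le_one_right (by positivity) this
  have h2 : IntegrableOn wtTwo (Ioi 1) := by
    refine (integrable_inv_one_add_sq.integrableOn (s := Ioi 1)).mono' wtTwo_measurable.aestronglyMeasurable ?_
    filter_upwards [ae_restrict_mem measurableSet_Ioi] with x hx
    have hx : 1 < x := hx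
    rw [Real.norm_of_nonneg (wtTwo_nonneg x), wtTwo]
    have : (√|x|)⁻¹ ≤ 1 := inv_le_one_of_one_le₀ (by
      rw [Real.one_le_sqrt, abs_of_pos (by linarith)]; exact hx.le)
    exact mul_le_of_le_one_left (by positivity) this
  have h3 : IntegrableOn wtTwo (Ioi 0) := by
    rw [← Ioc_union_Ioi_eq_Ioi zero_le_one]; exact h1.union h2
  have h4 : IntegrableOn wtTwo (Iic 0) := by
    have h3' : IntegrableOn wtTwo (Ici (-0)) := by
      rw [neg_zero, integrableOn_Ici_iff_integrableOn_Ioi]; exact h3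
    have := h3'.comp_neg_Iic
    exact this.congr_fun (fun x _ => by simp [wtTwo]) measurableSet_Iic
  rw [← integrableOn_univ, ← Iic_union_Ioi (a := (0:ℝ))]
  exact h4.union h3

variable {A : Type*} [NormedRing A] [NormedAlgebra ℂ A] [CompleteSpace A]

lemma kernel_integrable {a b p q : ℝ → ℂ} {W : ℝ × ℝ → A} {Ma Mb K c : ℝ} (hc : 0 < c)
    (ha : AEStronglyMeasurable a) (hb : AEStronglyMeasurable b)
    (hp : Measurable p) (hq : Measurable q)
    (hW : AEStronglyMeasurable W (volume.prod volume))
    (ba : ∀ᵐ t, ‖a t‖ ≤ Ma * (1 + t ^ 2)⁻¹) (bb : ∀ᵐ t, ‖b t‖ ≤ Mb * (1 + t ^ 2)⁻¹)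
    (bW : ∀ z, ‖W z‖ ≤ K)
    (hsep : ∀ t s, c * (√|t| * √|s|) ≤ ‖q s - p t‖) :
    Integrable (fun z : ℝ × ℝ => (a z.1 * b z.2 / (q z.2 - p z.1)) • W z) (volume.prod volume) := by
  have hi : Integrable (fun z : ℝ × ℝ => (Ma * Mb / c * K) * (wtTwo z.1 * wtTwo z.2))
      (volume.prod volume) := (wtTwo_integrable.mul_prod wtTwo_integrable).const_mul _
  have hne : ∀ᵐ t : ℝ, t ≠ 0 := by simp [ae_iff]
  refine hi.mono' ?_ ?_
  · refine AEStronglyMeasurable.smul ?_ hW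
    refine AEStronglyMeasurable.mul (ha.comp_fst.mul hb.comp_snd) ?_
    exact (((hq.comp measurable_snd).sub (hp.comp measurable_fst)).inv).aestronglyMeasurable
  · have q1 := Measure.quasiMeasurePreserving_fst (μ := (volume : Measure ℝ)) (ν := (volume : Measure ℝ))
    have q2 := Measure.quasiMeasurePreserving_snd (μ := (volume : Measure ℝ)) (ν := (volume : Measure ℝ))
    filter_upwards [q1.ae ba, q2.ae bb, q1.ae hne, q2.ae hne] with z h1 h2 h3 h4
    have k1 : 0 < √|z.1| := Real.sqrt_pos.2 (abs_pos.2 h3)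
    have k2 : 0 < √|z.2| := Real.sqrt_pos.2 (abs_pos.2 h4)
    have k3 := hsep z.1 z.2
    have hK : 0 ≤ K := (norm_nonneg _).trans (bW z)
    rw [norm_smul, norm_div, norm_mul]
    calc ‖a z.1‖ * ‖b z.2‖ / ‖q z.2 - p z.1‖ * ‖W z‖
        ≤ (Ma * (1 + z.1 ^ 2)⁻¹) * (Mb * (1 + z.2 ^ 2)⁻¹) / (c * (√|z.1| * √|z.2|)) * K := by
          have := (norm_nonneg _).trans h1
          have := (norm_nonneg _).trans h2
          gcongr
          exact bW z
      _ = _ := by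
          unfold wtTwo
          field_simp

lemma fubini_core {a b p q κ : ℝ → ℂ} {P Q : ℝ → A} {Ma Mb K c : ℝ} (hc : 0 < c)
    (ha : AEStronglyMeasurable a) (hb : AEStronglyMeasurable b)
    (hp : Measurable p) (hq : Measurable q)
    (hP : AEStronglyMeasurable P) (hQ : AEStronglyMeasurable Q)
    (ba : ∀ᵐ t, ‖a t‖ ≤ Ma * (1 + t ^ 2)⁻¹) (bb : ∀ᵐ t, ‖b t‖ ≤ Mb * (1 + t ^ 2)⁻¹)
    (bP : ∀ t, ‖P t‖ ≤ K) (bQ : ∀ t, ‖Q t‖ ≤ K)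
    (hsep : ∀ t s, c * (√|t| * √|s|) ≤ ‖q s - p t‖)
    (hres : ∀ t s, P t - Q s = (q s - p t) • (P t * Q s))
    (hκ : ∀ t, t ≠ 0 → ∫ s, b s / (q s - p t) = κ t)
    (h0 : ∀ s, s ≠ 0 → ∫ t, a t / (q s - p t) = 0) :
    (∫ t, a t • P t) * (∫ s, b s • Q s) = ∫ t, (a t * κ t) • P t := by
  have hne : ∀ᵐ t : ℝ, t ≠ 0 := by simp [ae_iff]
  have ia : Integrable (fun t => a t • P t) := by
    refine (integrable_inv_one_add_sq.const_mul (Ma * K)).mono' (ha.smul hP) ?_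
    filter_upwards [ba] with t ht
    rw [norm_smul]
    calc ‖a t‖ * ‖P t‖ ≤ Ma * (1 + t ^ 2)⁻¹ * K := by
          have := (norm_nonneg _).trans ht
          gcongr
          exact bP t
      _ = _ := by ring
  have ib : Integrable (fun t => b t • Q t) := by
    refine (integrable_inv_one_add_sq.const_mul (Mb * K)).mono' (hb.smul hQ) ?_
    filter_upwards [bb] with t ht
    rw [norm_smul]
    calc ‖b t‖ * ‖Q t‖ ≤ Mb * (1 + t ^ 2)⁻¹ * K := by
          have := (norm_nonneg _).trans ht
          gcongr
          exact bQ t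
      _ = _ := by ring
  have ik := kernel_integrable (W := fun z => P z.1) hc ha hb hp hq hP.comp_fst ba bb
    (fun z => bP z.1) hsep
  have il := kernel_integrable (W := fun z => Q z.2) hc ha hb hp hq hQ.comp_snd ba bb
    (fun z => bQ z.2) hsep
  have e1 : (∫ t, a t • P t) * (∫ s, b s • Q s) = ∫ t, ∫ s, (a t • P t) * (b s • Q s) := by
    rw [← integral_mul_const_of_integrable ia]
    refine integral_congr_ae (ae_of_all _ fun t => ?_)
    exact (integral_const_mul_of_integrable ib).symm
  have e2 : ∫ t, ∫ s, (a t • P t) * (b s • Q s) =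
      ∫ t, ∫ s, ((a t * b s / (q s - p t)) • P t - (a t * b s / (q s - p t)) • Q s) := by
    refine integral_congr_ae ?_
    filter_upwards [hne] with t ht
    refine integral_congr_ae ?_
    filter_upwards [hne] with s hs
    have k1 : 0 < √|t| := Real.sqrt_pos.2 (abs_pos.2 ht)
    have k2 : 0 < √|s| := Real.sqrt_pos.2 (abs_pos.2 hs)
    have hqp : q s - p t ≠ 0 := norm_pos_iff.1 (lt_of_lt_of_le (by positivity) (hsep t s))
    rw [← smul_sub, hres t s, smul_smul, div_mul_cancel₀ _ hqp, smul_mul_smul_comm]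
  have e3 : ∫ t, ∫ s, ((a t * b s / (q s - p t)) • P t - (a t * b s / (q s - p t)) • Q s) =
      (∫ t, ∫ s, (a t * b s / (q s - p t)) • P t) - ∫ t, ∫ s, (a t * b s / (q s - p t)) • Q s :=
    integral_integral_sub ik il
  have e4 : ∫ t, ∫ s, (a t * b s / (q s - p t)) • P t = ∫ t, (a t * κ t) • P t := by
    refine integral_congr_ae ?_
    filter_upwards [hne] with t ht
    rw [integral_smul_const, ← hκ t ht, ← integral_const_mul]
    simp only [mul_div_assoc]
  have e5 : ∫ t, ∫ s, (a t * b s / (q s - p t)) • Q s = 0 := by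
    rw [integral_integral_swap (f := fun t s => (a t * b s / (q s - p t)) • Q s) il]
    rw [← integral_zero ℝ A (μ := volume)]
    refine integral_congr_ae ?_
    filter_upwards [hne] with s hs
    rw [integral_smul_const]
    have : ∀ t, a t * b s / (q s - p t) = b s * (a t / (q s - p t)) := fun t => by ring
    simp only [this]
    rw [integral_const_mul, h0 s hs, mul_zero, zero_smul]
  rw [e1, e2, e3, e4, e5, sub_zero]

end FubiniCore
section Contour
set_option linter.unusedSectionVars false
variable {E : Type*} [NormedAddCommGroup E] [NormedSpace ℂ E]

/-- `logPull F w = e^w F(e^w)`. -/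
def logPull (F : ℂ → E) (w : ℂ) : E := Complex.exp w • F (Complex.exp w)

lemma exp_line (x y : ℝ) : Complex.exp (x + y * Complex.I) =
    (Real.exp x : ℂ) * Complex.exp (y * Complex.I) := by
  rw [Complex.exp_add, Complex.ofReal_exp]

lemma ray_pull (F : ℂ → E) (φ x : ℝ) :
    |Real.exp x| • (Complex.exp (φ * Complex.I) • F ((Real.exp x : ℂ) * Complex.exp (φ * Complex.I)))
      = logPull F (x + φ * Complex.I) := by
  rw [logPull, exp_line, abs_of_pos (Real.exp_pos x), ← Complex.coe_smul, smul_smul]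

lemma ray_integral (F : ℂ → E) (φ : ℝ) {S : Set ℝ} (hS : MeasurableSet S) :
    ∫ t in Real.exp '' S, Complex.exp (φ * Complex.I) • F ((t : ℂ) * Complex.exp (φ * Complex.I)) =
      ∫ x in S, logPull F (x + φ * Complex.I) := by
  rw [integral_image_eq_integral_abs_deriv_smul hS
    (fun x _ => (Real.hasDerivAt_exp x).hasDerivWithinAt) Real.exp_injective.injOn]
  simp only [ray_pull]

lemma ray_integrable (F : ℂ → E) (φ : ℝ) {S : Set ℝ} (hS : MeasurableSet S) :
    IntegrableOn (fun t : ℝ => Complex.exp (φ * Complex.I) •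
      F ((t : ℂ) * Complex.exp (φ * Complex.I))) (Real.exp '' S) ↔
      IntegrableOn (fun x : ℝ => logPull F (x + φ * Complex.I)) S := by
  rw [integrableOn_image_iff_integrableOn_abs_deriv_smul hS
    (fun x _ => (Real.hasDerivAt_exp x).hasDerivWithinAt) Real.exp_injective.injOn]
  simp only [ray_pull]

lemma exp_image_univ : Real.exp '' univ = Ioi 0 := by simp [Real.range_exp]

lemma exp_image_Ioi {ε : ℝ} (hε : 0 < ε) : Real.exp '' Ioi (Real.log ε) = Ioi ε := by
  ext t; constructor
  · rintro ⟨x, hx, rfl⟩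
    exact (Real.log_lt_iff_lt_exp hε).1 hx
  · intro ht
    exact ⟨Real.log t, Real.log_lt_log hε ht, Real.exp_log (hε.trans ht)⟩

lemma exp_two_pi_sub (θ : ℝ) : Complex.exp ((2 * Real.pi - θ : ℝ) * Complex.I) =
    Complex.exp (-(θ : ℂ) * Complex.I) := by
  rw [← Complex.exp_periodic (-(θ : ℂ) * Complex.I)]
  congr 1; push_cast; ring

/-- The integral along `Γ_{θ,ε}` outside the arc, in terms of logarithmic coordinates. -/
lemma gamma_right (F : ℂ → E) {θ ε : ℝ} (hε : 0 ≤ ε) {S : Set ℝ} (hS : MeasurableSet S)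
    (hSε : Real.exp '' S = Ioi ε)
    (i1 : Integrable (fun x : ℝ => logPull F (x + θ * Complex.I))) :
    IntegrableOn (fun t => gammaDeriv θ ε t • F (gammaCurve θ ε t)) (Ioi ε) ∧
    ∫ t in Ioi ε, gammaDeriv θ ε t • F (gammaCurve θ ε t) =
      ∫ x in S, logPull F (x + θ * Complex.I) := by
  have e : EqOn (fun t : ℝ => Complex.exp (θ * Complex.I) • F ((t : ℂ) * Complex.exp (θ * Complex.I)))
      (fun t => gammaDeriv θ ε t • F (gammaCurve θ ε t)) (Ioi ε) := by
    intro t ht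
    have ht : ε < t := ht
    simp only [gammaDeriv, gammaCurve, if_neg (show ¬ t ≤ -ε by linarith), if_neg (show ¬ t < ε by linarith)]
  constructor
  · refine IntegrableOn.congr_fun ?_ e measurableSet_Ioi
    rw [← hSε, ray_integrable F θ hS]; exact i1.integrableOn
  · rw [← ray_integral F θ hS, hSε]
    exact (setIntegral_congr_fun measurableSet_Ioi e).symm

lemma gamma_left (F : ℂ → E) {θ ε : ℝ} {S : Set ℝ} (hS : MeasurableSet S)
    (hSε : Real.exp '' S = Ioi ε)
    (i1 : Integrable (fun x : ℝ => logPull F (x + (2 * Real.pi - θ : ℝ) * Complex.I))) :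
    IntegrableOn (fun t => gammaDeriv θ ε t • F (gammaCurve θ ε t)) (Iic (-ε)) ∧
    ∫ t in Iic (-ε), gammaDeriv θ ε t • F (gammaCurve θ ε t) =
      - ∫ x in S, logPull F (x + (2 * Real.pi - θ : ℝ) * Complex.I) := by
  set h : ℝ → E := fun t : ℝ => Complex.exp ((2 * Real.pi - θ : ℝ) * Complex.I) •
    F ((t : ℂ) * Complex.exp ((2 * Real.pi - θ : ℝ) * Complex.I)) with hh
  have e : EqOn (fun t : ℝ => - h (-t))
      (fun t => gammaDeriv θ ε t • F (gammaCurve θ ε t)) (Iic (-ε)) := by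
    intro t ht
    have ht : t ≤ -ε := ht
    simp only [gammaDeriv, gammaCurve, if_pos ht, hh, exp_two_pi_sub, neg_smul, Complex.ofReal_neg]
  have ih : IntegrableOn h (Ioi ε) := by
    rw [← hSε, ray_integrable F _ hS]; exact i1.integrableOn
  constructor
  · refine IntegrableOn.congr_fun ?_ e measurableSet_Iic
    have h2 : IntegrableOn h (Ici (-(-ε))) := by
      rw [neg_neg, integrableOn_Ici_iff_integrableOn_Ioi]; exact ih
    exact h2.comp_neg_Iic.neg
  · rw [← ray_integral F _ hS, hSε, ← setIntegral_congr_fun measurableSet_Iic e, integral_neg,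
      integral_comp_neg_Iic, neg_neg]

lemma gamma_zero (F : ℂ → E) {θ : ℝ}
    (i1 : Integrable (fun x : ℝ => logPull F (x + θ * Complex.I)))
    (i2 : Integrable (fun x : ℝ => logPull F (x + (2 * Real.pi - θ : ℝ) * Complex.I))) :
    ∫ t, gammaDeriv θ 0 t • F (gammaCurve θ 0 t) =
      (∫ x : ℝ, logPull F (x + θ * Complex.I)) -
        ∫ x : ℝ, logPull F (x + (2 * Real.pi - θ : ℝ) * Complex.I) := by
  obtain ⟨a1, a2⟩ := gamma_right F le_rfl MeasurableSet.univ exp_image_univ i1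
  obtain ⟨b1, b2⟩ := gamma_left F (ε := 0) MeasurableSet.univ exp_image_univ i2
  rw [neg_zero] at b1 b2
  rw [← intervalIntegral.integral_Iic_add_Ioi b1 a1, a2, b2]
  simp only [Measure.restrict_univ]
  abel

lemma gamma_pos [CompleteSpace E] (F : ℂ → E) {θ ε K x0 : ℝ} (hε : 0 < ε) (hθ : θ < Real.pi)
    (i1 : Integrable (fun x : ℝ => logPull F (x + θ * Complex.I)))
    (i2 : Integrable (fun x : ℝ => logPull F (x + (2 * Real.pi - θ : ℝ) * Complex.I)))
    (hG : DifferentiableOn ℂ (logPull F)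
      {w : ℂ | w.re ≤ Real.log ε ∧ w.im ∈ uIcc θ (2 * Real.pi - θ)})
    (hb : ∀ x y : ℝ, x ≤ Real.log ε → x0 ≤ |x| → y ∈ uIcc θ (2 * Real.pi - θ) →
      ‖logPull F (x + y * Complex.I)‖ ≤ K * Real.exp (-|x|)) :
    ∫ t, gammaDeriv θ ε t • F (gammaCurve θ ε t) =
      (∫ x : ℝ, logPull F (x + θ * Complex.I)) -
        ∫ x : ℝ, logPull F (x + (2 * Real.pi - θ : ℝ) * Complex.I) := by
  obtain ⟨a1, a2⟩ := gamma_right F hε.le measurableSet_Ioi (exp_image_Ioi hε) i1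
  obtain ⟨b1, b2⟩ := gamma_left F measurableSet_Ioi (exp_image_Ioi hε) i2
  have hs := half_strip_lemma hG hb i1.integrableOn i2.integrableOn
  set d : ℝ := (Real.pi - θ) / ε with hd
  have hd0 : d ≠ 0 := by
    have : 0 < Real.pi - θ := by linarith
    positivity
  have hdε : d * ε = Real.pi - θ := by rw [hd]; field_simp
  set κ : ℂ := -Complex.I * d with hκ
  set V : ℝ → E := fun y => logPull F ((Real.log ε : ℝ) + y * Complex.I) with hV
  have earc : EqOn (fun t : ℝ => κ • V (Real.pi - d * t))
      (fun t => gammaDeriv θ ε t • F (gammaCurve θ ε t)) (Ioo (-ε) ε) := by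
    intro t ht
    simp only [gammaDeriv, gammaCurve, if_neg (show ¬ t ≤ -ε by linarith [ht.1]), if_pos ht.2,
      hV, logPull, exp_line, Real.exp_log hε]
    have e1 : Complex.exp (Complex.I * ((-(t * (Real.pi - θ) / ε) - Real.pi : ℝ) : ℂ)) =
        Complex.exp ((Real.pi - d * t : ℝ) * Complex.I) := by
      rw [← Complex.exp_periodic (Complex.I * _)]
      congr 1
      rw [hd]; push_cast; ring
    rw [e1, smul_smul]
    congr 1
    have : (d : ℂ) * ε = (Real.pi - θ : ℝ) := by rw [← hdε]; push_cast; ring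
    rw [hκ, ← this]; ring
  have hVc : ContinuousOn V (uIcc θ (2 * Real.pi - θ)) :=
    hG.continuousOn.comp (f := fun y : ℝ => ((Real.log ε : ℝ) : ℂ) + y * Complex.I)
      (by fun_prop) (fun y hy => ⟨by simp, by simpa using hy⟩)
  have earc' : ∀ᵐ t ∂(volume.restrict (Ioc (-ε) ε)),
      (fun t : ℝ => κ • V (Real.pi - d * t)) t =
      (fun t => gammaDeriv θ ε t • F (gammaCurve θ ε t)) t := by
    rw [← restrict_Ioo_eq_restrict_Ioc]
    exact (ae_restrict_mem measurableSet_Ioo).mono fun t ht => earc ht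
  have hVi : IntervalIntegrable (fun t : ℝ => κ • V (Real.pi - d * t)) volume (-ε) ε := by
    apply ContinuousOn.intervalIntegrable
    refine ContinuousOn.const_smul ?_ _
    refine hVc.comp (by fun_prop) fun t ht => ?_
    rw [uIcc_of_le (by linarith)] at ht ⊢
    have hd1 : 0 < d := by
      have : 0 < Real.pi - θ := by linarith
      positivity
    constructor <;> nlinarith [ht.1, ht.2]
  have iarc : IntegrableOn (fun t => gammaDeriv θ ε t • F (gammaCurve θ ε t)) (Ioc (-ε) ε) := by
    rw [intervalIntegrable_iff_integrableOn_Ioc_of_le (by linarith)] at hVi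
    exact hVi.congr earc'
  have harc : ∫ t in Ioc (-ε) ε, gammaDeriv θ ε t • F (gammaCurve θ ε t) =
      - (Complex.I • ∫ y in θ..(2 * Real.pi - θ), V y) := by
    rw [← integral_congr_ae earc', ← intervalIntegral.integral_of_le (by linarith),
      intervalIntegral.integral_smul, intervalIntegral.integral_comp_sub_mul _ hd0,
      hdε, mul_neg, hdε, ← Complex.coe_smul, smul_smul]
    have : κ * ((d⁻¹ : ℝ) : ℂ) = -Complex.I := by
      have : (d : ℂ) ≠ 0 := by exact_mod_cast hd0
      rw [hκ]; push_cast; field_simp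
    have k1 : Real.pi - (Real.pi - θ) = θ := by ring
    have k2 : Real.pi - -(Real.pi - θ) = 2 * Real.pi - θ := by ring
    rw [this, neg_smul, k1, k2]
  have hU : Iic (-ε) ∪ Ioc (-ε) ε = Iic ε := Iic_union_Ioc_eq_Iic (by linarith)
  have s1 : ∫ t in Iic ε, gammaDeriv θ ε t • F (gammaCurve θ ε t) =
      (∫ t in Iic (-ε), gammaDeriv θ ε t • F (gammaCurve θ ε t)) +
      ∫ t in Ioc (-ε) ε, gammaDeriv θ ε t • F (gammaCurve θ ε t) := by
    rw [← hU]
    exact setIntegral_union (Iic_disjoint_Ioc le_rfl) measurableSet_Ioc b1 iarc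
  have iU : IntegrableOn (fun t => gammaDeriv θ ε t • F (gammaCurve θ ε t)) (Iic ε) := by
    rw [← hU]; exact b1.union iarc
  rw [← intervalIntegral.integral_Iic_add_Ioi iU a1, s1, a2, b2, harc,
    ← intervalIntegral.integral_Iic_add_Ioi (b := Real.log ε) i1.integrableOn i1.integrableOn,
    ← intervalIntegral.integral_Iic_add_Ioi (b := Real.log ε) i2.integrableOn i2.integrableOn]
  rw [← sub_eq_zero]
  rw [← neg_eq_zero, ← hs]
  simp only [hV]
  abel

end Contour
section Sector
set_option linter.unusedSectionVars false

lemma cos_le_of_mem {θ y : ℝ} (h0 : Real.pi / 2 < θ) (hy : y ∈ Icc θ (2 * Real.pi - θ)) :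
    Real.cos y ≤ Real.cos θ := by
  have hpi := Real.pi_pos
  rcases le_total y Real.pi with h | h
  · exact Real.cos_le_cos_of_nonneg_of_le_pi (by linarith) h hy.1
  · rw [← Real.cos_two_pi_sub y]
    exact Real.cos_le_cos_of_nonneg_of_le_pi (by linarith) (by linarith) (by linarith [hy.2])

lemma cos_neg_of_gt {θ : ℝ} (h0 : Real.pi / 2 < θ) (h1 : θ < Real.pi) : Real.cos θ < 0 :=
  Real.cos_neg_of_pi_div_two_lt_of_lt h0 (by linarith [Real.pi_pos])

lemma norm_exp_line (x y : ℝ) : ‖Complex.exp (x + y * Complex.I)‖ = Real.exp x := by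
  rw [Complex.norm_exp]; simp

lemma re_exp_line (x y : ℝ) : (Complex.exp (x + y * Complex.I)).re = Real.exp x * Real.cos y := by
  rw [Complex.exp_re]; simp

lemma exp_re_neg {w : ℂ} (h : w.im ∈ Ioo (Real.pi / 2) (3 * Real.pi / 2)) : (Complex.exp w).re < 0 := by
  rw [Complex.exp_re]
  exact mul_neg_of_pos_of_neg (Real.exp_pos _)
    (Real.cos_neg_of_pi_div_two_lt_of_lt h.1 (by linarith [h.2]))

/-- Holomorphic functions on the left half plane with quadratic decay in the sector of angle `θ`. -/
structure Dec (f : ℂ → ℂ) (θ M : ℝ) : Prop where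
  holo : DifferentiableOn ℂ f {z : ℂ | z.re < 0}
  nn : 0 ≤ M
  dec : ∀ z : ℂ, z ≠ 0 → z.re ≤ Real.cos θ * ‖z‖ → ‖f z‖ ≤ M * (1 + ‖z‖ ^ 2)⁻¹

lemma Dec.mono {f : ℂ → ℂ} {θ θ' M : ℝ} (h : Dec f θ' M) (h0 : Real.pi / 2 < θ') (h1 : θ' ≤ θ)
    (h2 : θ < Real.pi) : Dec f θ M :=
  ⟨h.holo, h.nn, fun z hz hzr => h.dec z hz (hzr.trans (by
    have : Real.cos θ ≤ Real.cos θ' := cos_le_of_mem h0 ⟨h1, by linarith⟩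
    gcongr))⟩

lemma exp_mul_le (x : ℝ) : Real.exp x * (1 + Real.exp x ^ 2)⁻¹ ≤ Real.exp (-|x|) := by
  have h := Real.exp_pos x
  rw [mul_inv_le_iff₀ (by positivity)]
  rcases le_total 0 x with hx | hx
  · rw [abs_of_nonneg hx, Real.exp_neg]
    have : (Real.exp x)⁻¹ * (1 + Real.exp x ^ 2) = (Real.exp x)⁻¹ + Real.exp x := by field_simp
    rw [this]
    have : 0 < (Real.exp x)⁻¹ := by positivity
    linarith
  · rw [abs_of_nonpos hx, neg_neg]
    nlinarith [mul_pos h (pow_pos h 2)]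

lemma Dec.bound {f : ℂ → ℂ} {θ M : ℝ} (h : Dec f θ M) (h0 : Real.pi / 2 < θ) {x y : ℝ}
    (hy : y ∈ Icc θ (2 * Real.pi - θ)) :
    ‖Complex.exp (x + y * Complex.I)‖ * ‖f (Complex.exp (x + y * Complex.I))‖ ≤ M * Real.exp (-|x|) := by
  have h1 := h.dec (Complex.exp (x + y * Complex.I)) (Complex.exp_ne_zero _) (by
    rw [norm_exp_line, re_exp_line, mul_comm]
    have := cos_le_of_mem h0 hy
    have := Real.exp_pos x
    gcongr)
  rw [norm_exp_line] at h1 ⊢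
  calc Real.exp x * ‖f (Complex.exp (x + y * Complex.I))‖
      ≤ Real.exp x * (M * (1 + Real.exp x ^ 2)⁻¹) := by gcongr
    _ = M * (Real.exp x * (1 + Real.exp x ^ 2)⁻¹) := by ring
    _ ≤ _ := by
      have := h.nn
      have := exp_mul_le x
      gcongr

lemma Dec.diff_exp {f : ℂ → ℂ} {θ M : ℝ} (h : Dec f θ M) :
    DifferentiableOn ℂ (fun w => f (Complex.exp w)) {w : ℂ | w.im ∈ Ioo (Real.pi / 2) (3 * Real.pi / 2)} :=
  h.holo.comp Complex.differentiable_exp.differentiableOn fun _ hw => exp_re_neg hw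

lemma sub_exp_lower {x x0 : ℝ} (h : |x0| + 1 ≤ |x|) : Real.exp x0 / 2 ≤ |Real.exp x - Real.exp x0| := by
  have he : 2 ≤ Real.exp 1 := by have := Real.add_one_le_exp 1; linarith
  have h0 := Real.exp_pos x0
  rcases le_total 0 x with hx | hx
  · rw [abs_of_nonneg hx] at h
    have h1 : x0 + 1 ≤ x := by linarith [le_abs_self x0]
    have h2 := Real.exp_le_exp.2 h1
    rw [Real.exp_add] at h2
    have : Real.exp x0 ≤ Real.exp x - Real.exp x0 := by nlinarith
    exact le_trans (by linarith) (this.trans (le_abs_self _))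
  · rw [abs_of_nonpos hx] at h
    have h1 : x + 1 ≤ x0 := by linarith [neg_abs_le x0]
    have h2 := Real.exp_le_exp.2 h1
    rw [Real.exp_add] at h2
    have h3 := Real.exp_pos x
    have : Real.exp x0 / 2 ≤ -(Real.exp x - Real.exp x0) := by nlinarith
    exact this.trans (neg_le_abs _)

lemma kernel_decay {f : ℂ → ℂ} {θ M : ℝ} (h : Dec f θ M) (h0 : Real.pi / 2 < θ) (w0 : ℂ) {x y : ℝ}
    (hx : |w0.re| + 1 ≤ |x|) (hy : y ∈ Icc θ (2 * Real.pi - θ)) :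
    ‖logPull (fun z => f z / (z - Complex.exp w0)) (x + y * Complex.I)‖ ≤
      (2 * M * (Real.exp w0.re)⁻¹) * Real.exp (-|x|) := by
  have h1 := h.bound h0 (x := x) hy
  have h2 := sub_exp_lower hx
  have h3 : |Real.exp x - Real.exp w0.re| ≤ ‖Complex.exp (x + y * Complex.I) - Complex.exp w0‖ := by
    have := abs_norm_sub_norm_le (Complex.exp (x + y * Complex.I)) (Complex.exp w0)
    rwa [norm_exp_line, Complex.norm_exp] at this
  have hp := Real.exp_pos w0.re
  rw [logPull, norm_smul, norm_div, ← mul_div_assoc]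
  calc _ ≤ M * Real.exp (-|x|) / (Real.exp w0.re / 2) := by
        have hMn : 0 ≤ M * Real.exp (-|x|) := mul_nonneg h.nn (Real.exp_pos _).le
        exact div_le_div₀ hMn h1 (by positivity) (h2.trans h3)
    _ = _ := by field_simp

lemma exp_ne_of_im {w w0 : ℂ} (hne : w ≠ w0) (h : |w.im - w0.im| < 2 * Real.pi) :
    Complex.exp w ≠ Complex.exp w0 := by
  intro he
  obtain ⟨n, hn⟩ := Complex.exp_eq_exp_iff_exists_int.1 he
  have h1 : w.im - w0.im = n * (2 * Real.pi) := by
    rw [hn]; simp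
  rw [h1, abs_mul, abs_of_pos Real.two_pi_pos] at h
  have h2 : |(n : ℝ)| < 1 := by
    have := Real.two_pi_pos; nlinarith
  have h3 : n = 0 := by
    rw [← Int.abs_lt_one_iff]; exact_mod_cast h2
  apply hne; rw [hn, h3]; simp

lemma Ioo_of_Icc {θ y : ℝ} (h0 : Real.pi / 2 < θ) (hy : y ∈ Icc θ (2 * Real.pi - θ)) :
    y ∈ Ioo (Real.pi / 2) (3 * Real.pi / 2) := ⟨by linarith [hy.1], by linarith [hy.2]⟩

lemma cauchy_inside {g : ℂ → ℂ} {θ M : ℝ} (hg : Dec g θ M) (h0 : Real.pi / 2 < θ) {w0 : ℂ}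
    (hw : w0.im ∈ Ioo θ (2 * Real.pi - θ)) :
    ∫ s, g (gammaCurve θ 0 s) * gammaDeriv θ 0 s / (gammaCurve θ 0 s - Complex.exp w0) =
      2 * Real.pi * Complex.I * g (Complex.exp w0) := by
  have hpi := Real.pi_pos
  set F : ℂ → ℂ := fun z => g z / (z - Complex.exp w0) with hF
  have hop : IsOpen {w : ℂ | w.im ∈ Ioo (Real.pi / 2) (3 * Real.pi / 2)} :=
    isOpen_Ioo.preimage Complex.continuous_im
  have hw0 : w0 ∈ {w : ℂ | w.im ∈ Ioo (Real.pi / 2) (3 * Real.pi / 2)} :=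
    Ioo_of_Icc h0 ⟨hw.1.le, hw.2.le⟩
  set q : ℂ → ℂ := dslope Complex.exp w0 with hq
  have hqd : DifferentiableOn ℂ q {w : ℂ | w.im ∈ Ioo (Real.pi / 2) (3 * Real.pi / 2)} :=
    (Complex.differentiableOn_dslope (hop.mem_nhds hw0)).2 Complex.differentiable_exp.differentiableOn
  have him : ∀ w : ℂ, w.im ∈ Ioo (Real.pi / 2) (3 * Real.pi / 2) → |w.im - w0.im| < 2 * Real.pi := by
    intro w hw'
    have h2 : w0.im ∈ Ioo (Real.pi / 2) (3 * Real.pi / 2) := hw0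
    rw [abs_lt]; constructor <;> linarith [hw'.1, hw'.2, h2.1, h2.2]
  have hqv : ∀ w, w ≠ w0 → q w = (Complex.exp w - Complex.exp w0) / (w - w0) := by
    intro w hne; rw [hq, dslope_of_ne _ hne, slope_def_field]
  have hq0 : q w0 = Complex.exp w0 := by rw [hq, dslope_same, Complex.deriv_exp]
  have hqne : ∀ w : ℂ, w.im ∈ Ioo (Real.pi / 2) (3 * Real.pi / 2) → q w ≠ 0 := by
    intro w hw'
    by_cases hne : w = w0
    · rw [hne, hq0]; exact Complex.exp_ne_zero _
    · rw [hqv w hne]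
      exact div_ne_zero (sub_ne_zero.2 (exp_ne_of_im hne (him w hw'))) (sub_ne_zero.2 hne)
  set P : ℂ → ℂ := fun w => g (Complex.exp w) * Complex.exp w / q w with hP
  have hPd : DifferentiableOn ℂ P {w : ℂ | w.im ∈ Ioo (Real.pi / 2) (3 * Real.pi / 2)} :=
    (hg.diff_exp.mul Complex.differentiable_exp.differentiableOn).div hqd hqne
  have hFP : ∀ w : ℂ, w.im ∈ Ioo (Real.pi / 2) (3 * Real.pi / 2) → w ≠ w0 →
      logPull F w = P w / (w - w0) := by
    intro w hw' hne
    have k1 := sub_ne_zero.2 hne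
    have k2 := sub_ne_zero.2 (exp_ne_of_im hne (him w hw'))
    simp only [logPull, hF, hP, hqv w hne, smul_eq_mul]
    field_simp
  have hbd : ∀ x y : ℝ, |w0.re| + 1 ≤ |x| → y ∈ Icc θ (2 * Real.pi - θ) →
      ‖logPull F (x + y * Complex.I)‖ ≤ (2 * M * (Real.exp w0.re)⁻¹) * Real.exp (-|x|) :=
    fun x y hx hy => kernel_decay hg h0 w0 hx hy
  have hle : θ ≤ 2 * Real.pi - θ := (hw.1.trans hw.2).le
  have hmain := pole_lemma hPd h0 hw.1 hw.2 (by linarith) hFP hbd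
  have hint : ∀ y ∈ Icc θ (2 * Real.pi - θ), y ≠ w0.im →
      Integrable (fun x : ℝ => logPull F (x + y * Complex.I)) := by
    intro y hy hne
    refine integrable_of_cont_decay ?_ (fun x hx => hbd x y hx hy)
    have hne' : ∀ x : ℝ, (x : ℂ) + y * Complex.I ≠ w0 := by
      intro x hx; apply hne; rw [← hx]; simp
    have : (fun x : ℝ => logPull F (x + y * Complex.I)) =
        fun x : ℝ => P (x + y * Complex.I) / (x + y * Complex.I - w0) := by
      funext x; exact hFP _ (by simpa using Ioo_of_Icc h0 hy) (hne' x)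
    rw [this]
    exact (cont_line hPd.continuousOn (by intro x; simpa using Ioo_of_Icc h0 hy)).div (by fun_prop)
      (fun x => sub_ne_zero.2 (hne' x))
  have hz := gamma_zero F (hint θ ⟨le_rfl, hle⟩ hw.1.ne) (hint _ ⟨hle, le_rfl⟩ hw.2.ne')
  rw [hmain] at hz
  have hP0 : P w0 = g (Complex.exp w0) := by
    simp only [hP, hq0]; field_simp [Complex.exp_ne_zero w0]
  rw [hP0] at hz
  rw [← hz]
  refine integral_congr_ae (ae_of_all _ fun s => ?_)
  simp only [hF, smul_eq_mul]; ring

lemma cauchy_outside {f : ℂ → ℂ} {θ M : ℝ} (hf : Dec f θ M) (h0 : Real.pi / 2 < θ) (h1 : θ < Real.pi)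
    {w0 : ℂ} (hw : ∀ y ∈ Icc θ (2 * Real.pi - θ), y ≠ w0.im ∧ |y - w0.im| < 2 * Real.pi) :
    ∫ s, f (gammaCurve θ 0 s) * gammaDeriv θ 0 s / (Complex.exp w0 - gammaCurve θ 0 s) = 0 := by
  have hpi := Real.pi_pos
  set F : ℂ → ℂ := fun z => f z / (z - Complex.exp w0) with hF
  have hle : θ ≤ 2 * Real.pi - θ := by linarith
  have hd : DifferentiableOn ℂ (logPull F) {w : ℂ | w.im ∈ Icc θ (2 * Real.pi - θ)} := by
    refine Complex.differentiable_exp.differentiableOn.smul ?_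
    refine (hf.diff_exp.mono fun w hw' => Ioo_of_Icc h0 hw').div
      (Complex.differentiable_exp.differentiableOn.sub_const _) fun w hw' => ?_
    refine sub_ne_zero.2 (exp_ne_of_im ?_ (hw w.im hw').2)
    rintro rfl
    exact (hw _ hw').1 rfl
  have hbd : ∀ x y : ℝ, |w0.re| + 1 ≤ |x| → y ∈ Icc θ (2 * Real.pi - θ) →
      ‖logPull F (x + y * Complex.I)‖ ≤ (2 * M * (Real.exp w0.re)⁻¹) * Real.exp (-|x|) :=
    fun x y hx hy => kernel_decay hf h0 w0 hx hy
  have hint : ∀ y ∈ Icc θ (2 * Real.pi - θ),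
      Integrable (fun x : ℝ => logPull F (x + y * Complex.I)) := fun y hy =>
    integrable_of_cont_decay (cont_line hd.continuousOn (by intro x; simpa using hy))
      (fun x hx => hbd x y hx hy)
  have hz := gamma_zero F (hint θ ⟨le_rfl, hle⟩) (hint _ ⟨hle, le_rfl⟩)
  rw [← uIcc_of_le hle] at hd hbd
  rw [strip_lemma hd hbd, sub_self] at hz
  rw [← neg_eq_zero, ← hz, ← integral_neg]
  refine integral_congr_ae (ae_of_all _ fun s => ?_)
  simp only [hF, smul_eq_mul]
  rw [← neg_sub (gammaCurve θ 0 s) (Complex.exp w0), div_neg]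
  ring

end Sector
section Core
set_option linter.unusedSectionVars false

lemma exp_mem_sigma {δ : ℝ} (hδ : δ < Real.pi / 2) {w : ℂ} (h : |w.im| < Real.pi / 2 + δ) :
    Complex.exp w ∈ sigmaSet δ := by
  refine ⟨Complex.exp_ne_zero _, ?_⟩
  have := abs_lt.1 h
  rw [← Complex.log_im, Complex.log_exp (by linarith) (by linarith)]
  exact h

lemma exp_mem_sigma_left {δ : ℝ} (hδ : δ < Real.pi / 2) {w : ℂ}
    (h : |w.im - 2 * Real.pi| < Real.pi / 2 + δ) : Complex.exp w ∈ sigmaSet δ := by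
  have h1 : Complex.exp w = Complex.exp (w - 2 * Real.pi * Complex.I) := by
    rw [Complex.exp_sub, Complex.exp_two_pi_mul_I, div_one]
  rw [h1]
  exact exp_mem_sigma hδ (by simpa using h)

lemma IsPseudoResolvent.bdd {R : ℂ → X →L[ℂ] X} {δ r C : ℝ} (hR : IsPseudoResolvent R δ r C) :
    ∃ K, 0 ≤ K ∧ ∀ z ∈ resDom δ r, ‖R z‖ ≤ K := by
  obtain ⟨M, hM⟩ := hR.boundBall
  refine ⟨max M (C / r), le_max_of_le_right (div_nonneg hR.hC.le hR.hr.le), fun z hz => ?_⟩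
  by_cases h : ‖z‖ < r
  · exact (hM z h).trans (le_max_left _ _)
  · refine le_max_of_le_right ?_
    have hs : z ∈ sigmaSet δ := hz.resolve_right h
    refine (hR.bound z hs).trans ?_
    have := hR.hr
    have := hR.hC
    push Not at h
    gcongr

lemma pull_bound {R : ℂ → X →L[ℂ] X} {δ r K : ℝ} (hK : ∀ z ∈ resDom δ r, ‖R z‖ ≤ K)
    {f : ℂ → ℂ} {θ M : ℝ} (hf : Dec f θ M) (h0 : Real.pi / 2 < θ) {x y : ℝ}
    (hy : y ∈ Icc θ (2 * Real.pi - θ)) (hm : Complex.exp (x + y * Complex.I) ∈ resDom δ r) :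
    ‖logPull (fun z => f z • R z) (x + y * Complex.I)‖ ≤ (M * K) * Real.exp (-|x|) := by
  have h1 := hf.bound h0 (x := x) hy
  have h2 := hK _ hm
  have h3 := hf.nn
  rw [logPull, norm_smul, norm_smul, ← mul_assoc]
  calc _ ≤ M * Real.exp (-|x|) * K := by gcongr
    _ = _ := by ring

lemma pull_diff {R : ℂ → X →L[ℂ] X} {δ r : ℝ} (hR : DifferentiableOn ℂ R (resDom δ r))
    {f : ℂ → ℂ} {θ M : ℝ} (hf : Dec f θ M) :
    DifferentiableOn ℂ (logPull (fun z => f z • R z))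
      {w : ℂ | w.im ∈ Ioo (Real.pi / 2) (3 * Real.pi / 2) ∧ Complex.exp w ∈ resDom δ r} := by
  refine Complex.differentiable_exp.differentiableOn.smul ?_
  exact (hf.diff_exp.mono fun w hw => hw.1).smul
    (hR.comp Complex.differentiable_exp.differentiableOn fun w hw => hw.2)

lemma strip_mem {δ r θ : ℝ} (hδ : δ < Real.pi / 2) (h0 : Real.pi / 2 < θ)
    (h1 : θ < Real.pi / 2 + δ) {w : ℂ}
    (h : w.im ∈ Icc (Real.pi / 2) θ ∨ w.im ∈ Icc (2 * Real.pi - θ) (3 * Real.pi / 2)) :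
    Complex.exp w ∈ resDom δ r := by
  left
  rcases h with h | h
  · exact exp_mem_sigma hδ (abs_lt.2 ⟨by linarith [h.1, h.2], by linarith [h.1, h.2]⟩)
  · exact exp_mem_sigma_left hδ (abs_lt.2 ⟨by linarith [h.1, h.2], by linarith [h.1, h.2]⟩)

lemma pull_integrable {R : ℂ → X →L[ℂ] X} {δ r C : ℝ} (hR : IsPseudoResolvent R δ r C)
    {f : ℂ → ℂ} {θ θ1 M : ℝ} (hf : Dec f θ M) (h0 : Real.pi / 2 < θ) (h1 : θ ≤ θ1)
    (h2 : θ1 < Real.pi / 2 + δ) {y : ℝ}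
    (hy : y ∈ Icc θ θ1 ∨ y ∈ Icc (2 * Real.pi - θ1) (2 * Real.pi - θ)) :
    Integrable (fun x : ℝ => logPull (fun z => f z • R z) (x + y * Complex.I)) := by
  obtain ⟨K, hK0, hK⟩ := hR.bdd
  have hδ := hR.hδ
  have hpi := Real.pi_pos
  have hy1 : y ∈ Icc θ (2 * Real.pi - θ) := by
    rcases hy with h | h <;> constructor <;> linarith [h.1, h.2]
  have hm : ∀ x : ℝ, Complex.exp (x + y * Complex.I) ∈ resDom δ r := by
    intro x
    refine strip_mem (θ := θ1) hδ (by linarith) h2 ?_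
    simp only [Complex.add_im, Complex.ofReal_im, Complex.mul_im, Complex.ofReal_re, Complex.I_im,
      Complex.I_re, mul_one, mul_zero, add_zero, zero_add]
    exact hy.imp (fun h => ⟨by linarith [h.1], h.2⟩) (fun h => ⟨h.1, by linarith [h.2]⟩)
  refine integrable_of_cont_decay (x0 := 0) (K := M * K)
    (cont_line (pull_diff hR.holo hf).continuousOn ?_) (fun x _ => pull_bound hK hf h0 hy1 (hm x))
  exact fun x => ⟨by simpa using Ioo_of_Icc h0 hy1, hm x⟩

lemma contour_angle {R : ℂ → X →L[ℂ] X} {δ r C : ℝ} (hR : IsPseudoResolvent R δ r C)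
    {f : ℂ → ℂ} {θ θ1 M : ℝ} (hf : Dec f θ M) (h0 : Real.pi / 2 < θ) (h1 : θ ≤ θ1)
    (h2 : θ1 < Real.pi / 2 + δ) :
    ∫ t, gammaDeriv θ 0 t • (f (gammaCurve θ 0 t) • R (gammaCurve θ 0 t)) =
    ∫ t, gammaDeriv θ1 0 t • (f (gammaCurve θ1 0 t) • R (gammaCurve θ1 0 t)) := by
  obtain ⟨K, hK0, hK⟩ := hR.bdd
  have hδ := hR.hδ
  have hpi := Real.pi_pos
  have hi := fun y hy => pull_integrable hR hf h0 h1 h2 (y := y) hy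
  have e1 := gamma_zero (fun z => f z • R z) (hi θ (Or.inl ⟨le_rfl, h1⟩))
    (hi _ (Or.inr ⟨by linarith, le_rfl⟩))
  have e2 := gamma_zero (fun z => f z • R z) (hi θ1 (Or.inl ⟨h1, le_rfl⟩))
    (hi _ (Or.inr ⟨le_rfl, by linarith⟩))
  have s1 : ∫ x : ℝ, logPull (fun z => f z • R z) (x + θ * Complex.I) =
      ∫ x : ℝ, logPull (fun z => f z • R z) (x + θ1 * Complex.I) := by
    refine strip_lemma (x0 := 0) (K := M * K) ((pull_diff hR.holo hf).mono ?_) ?_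
    · intro w hw
      rw [uIcc_of_le h1] at hw
      exact ⟨⟨by linarith [hw.1], by linarith [hw.2]⟩,
        strip_mem hδ (by linarith) h2 (Or.inl ⟨by linarith [hw.1], hw.2⟩)⟩
    · intro x y _ hy
      rw [uIcc_of_le h1] at hy
      refine pull_bound hK hf h0 ⟨hy.1, by linarith [hy.2]⟩ (strip_mem hδ (by linarith) h2 (Or.inl ?_))
      simpa using ⟨by linarith [hy.1], hy.2⟩
  have hle : 2 * Real.pi - θ1 ≤ 2 * Real.pi - θ := by linarith
  have s2 : ∫ x : ℝ, logPull (fun z => f z • R z) (x + (2 * Real.pi - θ1 : ℝ) * Complex.I) =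
      ∫ x : ℝ, logPull (fun z => f z • R z) (x + (2 * Real.pi - θ : ℝ) * Complex.I) := by
    refine strip_lemma (x0 := 0) (K := M * K) ((pull_diff hR.holo hf).mono ?_) ?_
    · intro w hw
      rw [uIcc_of_le hle] at hw
      exact ⟨⟨by linarith [hw.1], by linarith [hw.2]⟩,
        strip_mem hδ (by linarith) h2 (Or.inr ⟨hw.1, by linarith [hw.2]⟩)⟩
    · intro x y _ hy
      rw [uIcc_of_le hle] at hy
      refine pull_bound hK hf h0 ⟨by linarith [hy.1], hy.2⟩ (strip_mem hδ (by linarith) h2 (Or.inr ?_))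
      have h3 : y ≤ 3 * Real.pi / 2 := by linarith [hy.2]
      have h4 := hy.1
      simp only [Complex.add_im, Complex.ofReal_im, Complex.mul_im, Complex.ofReal_re, Complex.I_im,
        Complex.I_re, mul_one, mul_zero, add_zero, zero_add]
      exact ⟨h4, h3⟩
  rw [e1, e2, s1, s2]

lemma contour_eps {R : ℂ → X →L[ℂ] X} {δ r C : ℝ} (hR : IsPseudoResolvent R δ r C)
    {f : ℂ → ℂ} {θ ε M : ℝ} (hf : Dec f θ M) (h0 : Real.pi / 2 < θ)
    (h2 : θ < Real.pi / 2 + δ) (hε : 0 ≤ ε) (hc : ∀ t : ℝ, gammaCurve θ ε t ∈ resDom δ r) :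
    ∫ t, gammaDeriv θ ε t • (f (gammaCurve θ ε t) • R (gammaCurve θ ε t)) =
    ∫ t, gammaDeriv θ 0 t • (f (gammaCurve θ 0 t) • R (gammaCurve θ 0 t)) := by
  rcases hε.eq_or_lt with rfl | hε
  · rfl
  obtain ⟨K, hK0, hK⟩ := hR.bdd
  have hδ := hR.hδ
  have hpi := Real.pi_pos
  have hεr : ε < r := by
    have h := hc 0
    have hz : gammaCurve θ ε 0 = ((-ε : ℝ) : ℂ) := by
      rw [gammaCurve, if_neg (by linarith), if_pos hε]
      simp only [zero_mul, zero_div, neg_zero, zero_sub]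
      have : Complex.I * ((-Real.pi : ℝ) : ℂ) = -(Real.pi * Complex.I) := by push_cast; ring
      rw [this, Complex.exp_neg, Complex.exp_pi_mul_I]
      push_cast; norm_num
    rw [hz] at h
    rcases h with h | h
    · have := h.2
      rw [Complex.arg_ofReal_of_neg (by linarith), abs_of_pos hpi] at this
      linarith
    · have : ‖((-ε : ℝ) : ℂ)‖ < r := h
      rwa [Complex.norm_real, Real.norm_eq_abs, abs_neg, abs_of_pos hε] at this
  have hi := fun y hy => pull_integrable hR hf h0 le_rfl h2 (y := y) hy
  have hle : θ ≤ 2 * Real.pi - θ := by linarith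
  have hball : ∀ w : ℂ, w.re ≤ Real.log ε → Complex.exp w ∈ resDom δ r := by
    intro w hw
    right
    change ‖Complex.exp w‖ < r
    rw [Complex.norm_exp]
    have := Real.exp_le_exp.2 hw
    rw [Real.exp_log hε] at this
    linarith
  rw [gamma_zero (fun z => f z • R z) (hi θ (Or.inl ⟨le_rfl, le_rfl⟩))
    (hi _ (Or.inr ⟨le_rfl, le_rfl⟩))]
  refine gamma_pos (x0 := 0) (K := M * K) (fun z => f z • R z) hε (by linarith) (hi θ (Or.inl ⟨le_rfl, le_rfl⟩))
    (hi _ (Or.inr ⟨le_rfl, le_rfl⟩)) ((pull_diff hR.holo hf).mono ?_) ?_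
  · rintro w ⟨hw1, hw2⟩
    rw [uIcc_of_le hle] at hw2
    exact ⟨Ioo_of_Icc h0 hw2, hball w hw1⟩
  · intro x y hx _ hy
    rw [uIcc_of_le hle] at hy
    exact pull_bound hK hf h0 hy (hball _ (by simpa using hx))

lemma im_line (x y : ℝ) : ((x : ℂ) + (y : ℂ) * Complex.I).im = y := by simp

lemma gz_pos (θ : ℝ) {t : ℝ} (ht : 0 < t) :
    gammaCurve θ 0 t = Complex.exp ((Real.log t : ℝ) + (θ : ℝ) * Complex.I) := by
  rw [exp_line, Real.exp_log ht, gammaCurve, if_neg (by linarith), if_neg (by linarith)]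

lemma gz_neg (θ : ℝ) {t : ℝ} (ht : t < 0) :
    gammaCurve θ 0 t = Complex.exp ((Real.log (-t) : ℝ) + (2 * Real.pi - θ : ℝ) * Complex.I) := by
  rw [exp_line, Real.exp_log (by linarith), exp_two_pi_sub, gammaCurve, if_pos (by linarith)]
  push_cast; rfl

lemma gz_zero (θ : ℝ) : gammaCurve θ 0 0 = 0 := by simp [gammaCurve]

lemma gz_form (θ t : ℝ) : ∃ α : ℝ, (α = θ ∨ α = -θ) ∧
    gammaCurve θ 0 t = (|t| : ℝ) * Complex.exp (α * Complex.I) := by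
  by_cases h : t ≤ 0
  · refine ⟨-θ, Or.inr rfl, ?_⟩
    rw [gammaCurve, if_pos (by linarith), abs_of_nonpos h]; push_cast; rfl
  · push Not at h
    refine ⟨θ, Or.inl rfl, ?_⟩
    rw [gammaCurve, if_neg (by linarith), if_neg (by linarith), abs_of_pos h]

lemma gz_norm (θ t : ℝ) : ‖gammaCurve θ 0 t‖ = |t| := by
  obtain ⟨α, -, h⟩ := gz_form θ t
  rw [h, norm_mul, Complex.norm_exp_ofReal_mul_I, Complex.norm_real]; simp

lemma gz_re (θ t : ℝ) : (gammaCurve θ 0 t).re = Real.cos θ * |t| := by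
  obtain ⟨α, ha, h⟩ := gz_form θ t
  rw [h, Complex.re_ofReal_mul, Complex.exp_ofReal_mul_I_re, mul_comm]
  rcases ha with rfl | rfl <;> simp

lemma gz_deriv_norm (θ t : ℝ) : ‖gammaDeriv θ 0 t‖ = 1 := by
  have h1 := Complex.norm_exp_ofReal_mul_I θ
  have h2 := Complex.norm_exp_ofReal_mul_I (-θ)
  push_cast at h2
  rw [gammaDeriv]
  split_ifs with a b
  · rw [norm_neg, h2]
  · linarith
  · exact h1

lemma meas_curve (θ ε : ℝ) : Measurable (gammaCurve θ ε) := by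
  unfold gammaCurve
  refine Measurable.ite measurableSet_Iic (by fun_prop) (Measurable.ite measurableSet_Iio ?_ (by fun_prop))
  fun_prop

lemma meas_deriv (θ ε : ℝ) : Measurable (gammaDeriv θ ε) := by
  unfold gammaDeriv
  refine Measurable.ite measurableSet_Iic (by fun_prop) (Measurable.ite measurableSet_Iio ?_ (by fun_prop))
  fun_prop

lemma aesm_comp {E : Type*} [NormedAddCommGroup E] {G : ℂ → E} {S : Set ℂ} {p : ℝ → ℂ}
    (hG : ContinuousOn G S) (hS : MeasurableSet S) (hp : Measurable p) (h : ∀ᵐ t, p t ∈ S) :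
    AEStronglyMeasurable (fun t => G (p t)) := by
  have h1 : AEStronglyMeasurable G (Measure.map p volume) := by
    have h2 := hG.aestronglyMeasurable (μ := Measure.map p volume) hS
    rwa [Measure.restrict_eq_self_of_ae_mem] at h2
    exact (ae_map_iff hp.aemeasurable hS).2 h
  exact h1.comp_measurable hp

lemma meas_resDom (δ r : ℝ) : MeasurableSet (resDom δ r) := by
  refine MeasurableSet.union ?_ (measurableSet_lt measurable_norm measurable_const)
  exact (measurableSet_singleton (0 : ℂ)).compl.inter
    (measurableSet_lt Complex.measurable_arg.abs measurable_const)

lemma meas_half : MeasurableSet {z : ℂ | z.re < 0} :=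
  measurableSet_lt Complex.measurable_re measurable_const

lemma sep_aux (ρ σ α β : ℝ) (hρ : 0 ≤ ρ) (hσ : 0 ≤ σ) {c : ℝ} (hc : 0 ≤ c)
    (h : c ^ 2 ≤ 2 * (1 - Real.cos (α - β))) :
    c * (√ρ * √σ) ≤ ‖(σ : ℂ) * Complex.exp (β * Complex.I) - (ρ : ℂ) * Complex.exp (α * Complex.I)‖ := by
  refine (sq_le_sq₀ (by positivity) (norm_nonneg _)).1 ?_
  rw [← Complex.normSq_eq_norm_sq, Complex.normSq_apply]
  simp only [Complex.sub_re, Complex.sub_im, Complex.re_ofReal_mul, Complex.im_ofReal_mul,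
    Complex.exp_ofReal_mul_I_re, Complex.exp_ofReal_mul_I_im]
  rw [mul_pow, mul_pow, Real.sq_sqrt hρ, Real.sq_sqrt hσ]
  rw [Real.cos_sub] at h
  have h1 := Real.sin_sq_add_cos_sq α
  have h2 := Real.sin_sq_add_cos_sq β
  have h3 := mul_le_mul_of_nonneg_right h (mul_nonneg hρ hσ)
  have h4 : (σ * Real.cos β - ρ * Real.cos α) * (σ * Real.cos β - ρ * Real.cos α) +
      (σ * Real.sin β - ρ * Real.sin α) * (σ * Real.sin β - ρ * Real.sin α) =
      σ ^ 2 * (Real.sin β ^ 2 + Real.cos β ^ 2) + ρ ^ 2 * (Real.sin α ^ 2 + Real.cos α ^ 2) -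
      2 * (Real.cos α * Real.cos β + Real.sin α * Real.sin β) * (ρ * σ) := by ring
  rw [h4, h1, h2]
  nlinarith [sq_nonneg (ρ - σ)]

lemma gz_sep {θ θ1 : ℝ} (h0 : Real.pi / 2 < θ) (h1 : θ < θ1) (h2 : θ1 < Real.pi) :
    ∃ c, 0 < c ∧ ∀ t s, c * (√|t| * √|s|) ≤ ‖gammaCurve θ 0 s - gammaCurve θ1 0 t‖ := by
  have hpi := Real.pi_pos
  have k1 : Real.cos (θ1 - θ) < 1 := by
    refine lt_of_le_of_ne (Real.cos_le_one _) fun h => ?_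
    have := (Real.cos_eq_one_iff_of_lt_of_lt (by linarith) (by linarith)).1 h
    linarith
  have k2 : Real.cos (θ1 + θ) < 1 := by
    refine lt_of_le_of_ne (Real.cos_le_one _) fun h => ?_
    have := (Real.cos_eq_one_iff_of_lt_of_lt (by linarith) (by linarith)).1 h
    linarith
  set m := max (Real.cos (θ1 - θ)) (Real.cos (θ1 + θ)) with hm
  have hm1 : m < 1 := max_lt k1 k2
  have hpos : 0 < 2 * (1 - m) := by linarith
  refine ⟨√(2 * (1 - m)), Real.sqrt_pos.2 hpos, fun t s => ?_⟩
  obtain ⟨α, ha, e1⟩ := gz_form θ1 t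
  obtain ⟨β, hb, e2⟩ := gz_form θ s
  rw [e1, e2]
  refine sep_aux _ _ _ _ (abs_nonneg _) (abs_nonneg _) (Real.sqrt_nonneg _) ?_
  rw [Real.sq_sqrt hpos.le]
  have : Real.cos (α - β) ≤ m := by
    rcases ha with ha | ha <;> rcases hb with hb | hb <;> rw [ha, hb]
    · exact le_max_left _ _
    · rw [sub_neg_eq_add]; exact le_max_right _ _
    · rw [← Real.cos_neg, show -(-θ1 - θ) = θ1 + θ by ring]
      exact le_max_right _ _
    · rw [← Real.cos_neg, show -(-θ1 - -θ) = θ1 - θ by ring]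
      exact le_max_left _ _
  linarith

lemma gz_mem {δ r θ : ℝ} (hδ : δ < Real.pi / 2) (hr : 0 < r) (h0 : Real.pi / 2 < θ)
    (h1 : θ < Real.pi / 2 + δ) (t : ℝ) : gammaCurve θ 0 t ∈ resDom δ r := by
  rcases lt_trichotomy t 0 with h | h | h
  · rw [gz_neg θ h]
    refine strip_mem hδ h0 h1 (Or.inr ?_)
    rw [im_line]; constructor <;> linarith
  · rw [h, gz_zero]; right; simpa using hr
  · rw [gz_pos θ h]
    refine strip_mem hδ h0 h1 (Or.inl ?_)
    rw [im_line]; constructor <;> linarith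

lemma core_mult {R : ℂ → X →L[ℂ] X} {δ r C : ℝ} (hR : IsPseudoResolvent R δ r C)
    {f g : ℂ → ℂ} {θ θ1 M N : ℝ} (hf : Dec f θ M) (hg : Dec g θ N) (h0 : Real.pi / 2 < θ)
    (h1 : θ < θ1) (h2 : θ1 < Real.pi / 2 + δ) :
    (∫ t, (f (gammaCurve θ1 0 t) * gammaDeriv θ1 0 t) • R (gammaCurve θ1 0 t)) *
      (∫ t, (g (gammaCurve θ 0 t) * gammaDeriv θ 0 t) • R (gammaCurve θ 0 t)) =
    ∫ t, (f (gammaCurve θ1 0 t) * gammaDeriv θ1 0 t *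
      (2 * Real.pi * Complex.I * g (gammaCurve θ1 0 t))) • R (gammaCurve θ1 0 t) := by
  obtain ⟨K, hK0, hK⟩ := hR.bdd
  have hδ := hR.hδ
  have hpi := Real.pi_pos
  have h3 : θ1 < Real.pi := by linarith
  obtain ⟨c, hc, hsep⟩ := gz_sep h0 h1 h3
  have hf1 : Dec f θ1 M := hf.mono h0 h1.le h3
  have hne : ∀ᵐ t : ℝ, t ≠ 0 := by simp [ae_iff]
  have mem := fun t => gz_mem (r := r) hδ hR.hr h0 (by linarith) t
  have mem1 := fun t => gz_mem (r := r) hδ hR.hr (h0.trans h1) h2 t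
  have hre : ∀ {φ t : ℝ}, Real.pi / 2 < φ → φ < Real.pi → t ≠ 0 → (gammaCurve φ 0 t).re < 0 := by
    intro φ t a b ht
    rw [gz_re]
    exact mul_neg_of_neg_of_pos (cos_neg_of_gt a b) (abs_pos.2 ht)
  have hms : ∀ {k : ℂ → ℂ} {φ : ℝ}, DifferentiableOn ℂ k {z : ℂ | z.re < 0} → Real.pi / 2 < φ →
      φ < Real.pi → AEStronglyMeasurable (fun t => k (gammaCurve φ 0 t) * gammaDeriv φ 0 t) := by
    intro k φ hk a b
    exact (aesm_comp hk.continuousOn meas_half (meas_curve φ 0)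
      (hne.mono fun t ht => hre a b ht)).mul (meas_deriv φ 0).aestronglyMeasurable
  have hbd : ∀ {k : ℂ → ℂ} {φ L : ℝ}, Dec k φ L → ∀ᵐ t,
      ‖k (gammaCurve φ 0 t) * gammaDeriv φ 0 t‖ ≤ L * (1 + t ^ 2)⁻¹ := by
    intro k φ L hk
    refine hne.mono fun t ht => ?_
    rw [norm_mul, gz_deriv_norm, mul_one]
    have := hk.dec (gammaCurve φ 0 t) (by rw [← norm_pos_iff, gz_norm]; exact abs_pos.2 ht)
      (by rw [gz_re, gz_norm])
    rwa [gz_norm, sq_abs] at this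
  refine fubini_core (K := K) hc (hms hf.holo (h0.trans h1) h3) (hms hg.holo h0 (h1.trans h3))
    (meas_curve _ _) (meas_curve _ _)
    (aesm_comp hR.holo.continuousOn (meas_resDom δ r) (meas_curve _ _) (ae_of_all _ mem1))
    (aesm_comp hR.holo.continuousOn (meas_resDom δ r) (meas_curve _ _) (ae_of_all _ mem))
    (hbd hf1) (hbd hg) (fun t => hK _ (mem1 t)) (fun t => hK _ (mem t)) hsep
    (fun t s => hR.pseudo _ _ (mem1 t) (mem s)) ?_ ?_
  · intro t ht
    rcases lt_or_gt_of_ne ht with h | h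
    · rw [gz_neg θ1 h]
      exact cauchy_inside hg h0 (by rw [im_line]; constructor <;> linarith)
    · rw [gz_pos θ1 h]
      exact cauchy_inside hg h0 (by rw [im_line]; constructor <;> linarith)
  · intro s hs
    rcases lt_or_gt_of_ne hs with h | h
    · rw [gz_neg θ h]
      refine cauchy_outside hf1 (h0.trans h1) h3 fun y hy => ?_
      rw [im_line]
      exact ⟨(by linarith [hy.2] : y < _).ne, abs_lt.2 ⟨by linarith [hy.1], by linarith [hy.2]⟩⟩
    · rw [gz_pos θ h]
      refine cauchy_outside hf1 (h0.trans h1) h3 fun y hy => ?_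
      rw [im_line]
      exact ⟨(by linarith [hy.1] : _ < y).ne', abs_lt.2 ⟨by linarith [hy.1], by linarith [hy.2]⟩⟩

lemma gamma_re_neg {θ ε t : ℝ} (h0 : Real.pi / 2 < θ) (h1 : θ < Real.pi) (hε : 0 ≤ ε) (ht : t ≠ 0) :
    (gammaCurve θ ε t).re < 0 := by
  have hpi := Real.pi_pos
  have hcos := cos_neg_of_gt h0 h1
  rw [gammaCurve]
  split_ifs with a b
  · have e : (-(t : ℂ)) * Complex.exp (-(θ : ℂ) * Complex.I) =
        ((-t : ℝ) : ℂ) * Complex.exp (((-θ : ℝ) : ℂ) * Complex.I) := by push_cast; rfl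
    rw [e, Complex.re_ofReal_mul, Complex.exp_ofReal_mul_I_re, Real.cos_neg]
    have : t < 0 := lt_of_le_of_ne (by linarith) ht
    nlinarith
  · push Not at a
    have hε1 : 0 < ε := by linarith
    rw [mul_comm Complex.I, Complex.re_ofReal_mul, Complex.exp_ofReal_mul_I_re, ← Real.cos_neg,
      show -(-(t * (Real.pi - θ) / ε) - Real.pi) = t * (Real.pi - θ) / ε + Real.pi by ring,
      Real.cos_add_pi]
    have k : |t * (Real.pi - θ) / ε| < Real.pi / 2 := by
      rw [abs_div, abs_mul, abs_of_pos hε1, abs_of_pos (by linarith : 0 < Real.pi - θ),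
        div_lt_iff₀ hε1]
      have : |t| ≤ ε := abs_le.2 ⟨a.le, b.le⟩
      nlinarith
    have := Real.cos_pos_of_mem_Ioo (abs_lt.1 k)
    nlinarith
  · rw [Complex.re_ofReal_mul, Complex.exp_ofReal_mul_I_re]
    have : 0 < t := lt_of_le_of_ne (by linarith) ht.symm
    nlinarith

lemma ha_integrable {f : ℂ → ℂ} (hf : MemHaInf f) {θ ε : ℝ} (h0 : Real.pi / 2 < θ)
    (h1 : θ < Real.pi) (hε : 0 ≤ ε) :
    Integrable (fun t => f (gammaCurve θ ε t) * gammaDeriv θ ε t) := by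
  have hne : ∀ᵐ t : ℝ, t ≠ 0 := by simp [ae_iff]
  have hms : AEStronglyMeasurable (fun t => f (gammaCurve θ ε t) * gammaDeriv θ ε t) :=
    (aesm_comp hf.holo.continuousOn meas_half (meas_curve θ ε)
      (hne.mono fun t ht => gamma_re_neg h0 h1 hε ht)).mul (meas_deriv θ ε).aestronglyMeasurable
  have n1 := Complex.norm_exp_ofReal_mul_I θ
  have n2 := Complex.norm_exp_ofReal_mul_I (-θ)
  push_cast at n2
  have j1 : IntegrableOn (fun t => f (gammaCurve θ ε t) * gammaDeriv θ ε t) (Ioi ε) := by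
    have h := (hf.lineIntPlus 0 le_rfl θ h0 h1).mono_set (Ioi_subset_Ioi hε)
    refine Integrable.mono' h hms.restrict ?_
    refine (ae_restrict_mem measurableSet_Ioi).mono fun t ht => ?_
    have ht' : ε < t := ht
    rw [gammaCurve, gammaDeriv, if_neg (by linarith), if_neg (by linarith), if_neg (by linarith),
      if_neg (by linarith), norm_mul, n1]
    simp
  have j2 : IntegrableOn (fun t => f (gammaCurve θ ε t) * gammaDeriv θ ε t) (Iio (-ε)) := by
    have h := ((hf.lineIntMinus 0 le_rfl θ h0 h1).mono_set (Ioi_subset_Ioi hε))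
    rw [← neg_neg ε] at h
    have h := h.comp_neg_Iio
    refine Integrable.mono' h hms.restrict ?_
    refine (ae_restrict_mem measurableSet_Iio).mono fun t ht => ?_
    have ht' : t < -ε := ht
    rw [gammaCurve, gammaDeriv, if_pos (by linarith), if_pos (by linarith), norm_mul, norm_neg, n2]
    simp
  have j3 : IntegrableOn (fun t => f (gammaCurve θ ε t) * gammaDeriv θ ε t) (Icc (-ε) ε) := by
    obtain ⟨M, hM⟩ := hf.bdd
    refine Measure.integrableOn_of_bounded (M := M * (1 + Real.pi)) (by simp) hms ?_
    refine ae_restrict_of_ae (hne.mono fun t ht => ?_)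
    rw [norm_mul]
    have hb := hM _ (gamma_re_neg h0 h1 hε ht)
    have hd : ‖gammaDeriv θ ε t‖ ≤ 1 + Real.pi := by
      have hpi := Real.pi_pos
      rw [gammaDeriv]
      split_ifs
      · rw [norm_neg, n2]; linarith
      · rw [mul_comm Complex.I, norm_mul, Complex.norm_exp_ofReal_mul_I, norm_mul, norm_neg,
          Complex.norm_I, Complex.norm_real, Real.norm_eq_abs, abs_of_pos (by linarith)]
        linarith
      · rw [n1]; linarith
    have : 0 ≤ M := (norm_nonneg _).trans hb
    gcongr
  have hu : (Iio (-ε) ∪ Icc (-ε) ε) ∪ Ioi ε = univ := by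
    ext t
    simp only [mem_union, mem_Iio, mem_Icc, mem_Ioi, mem_univ, iff_true]
    by_cases a : t < -ε
    · exact Or.inl (Or.inl a)
    · by_cases b : ε < t
      · exact Or.inr b
      · exact Or.inl (Or.inr ⟨by linarith, by linarith⟩)
  have := (j2.union j3).union j1
  rwa [hu, integrableOn_univ] at this

lemma gamma_limit {R : ℂ → X →L[ℂ] X} {δ r C : ℝ} (hR : IsPseudoResolvent R δ r C)
    {k : ℂ → ℂ} {θ ε : ℝ} (h0 : Real.pi / 2 < θ) (h1 : θ < Real.pi) (hε : 0 ≤ ε)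
    (hc : ∀ t : ℝ, gammaCurve θ ε t ∈ resDom δ r)
    (hk : Integrable (fun t => k (gammaCurve θ ε t) * gammaDeriv θ ε t))
    (u : ℕ → ℝ) (hu : ∀ n, 0 ≤ u n) (hu0 : Tendsto u atTop (𝓝 0)) :
    Tendsto (fun n => ∫ t, (k (gammaCurve θ ε t) * gammaDeriv θ ε t *
      Complex.exp (u n * gammaCurve θ ε t)) • R (gammaCurve θ ε t)) atTop
      (𝓝 (∫ t, (k (gammaCurve θ ε t) * gammaDeriv θ ε t) • R (gammaCurve θ ε t))) := by
  obtain ⟨K, hK0, hK⟩ := hR.bdd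
  have hne : ∀ᵐ t : ℝ, t ≠ 0 := by simp [ae_iff]
  have hRm := aesm_comp hR.holo.continuousOn (meas_resDom δ r) (meas_curve θ ε) (ae_of_all _ hc)
  have hcm := meas_curve θ ε
  refine tendsto_integral_of_dominated_convergence
    (fun t => ‖k (gammaCurve θ ε t) * gammaDeriv θ ε t‖ * K) ?_ (hk.norm.mul_const K) ?_ ?_
  · intro n
    refine (hk.aestronglyMeasurable.mul ?_).smul hRm
    exact (Complex.measurable_exp.comp (hcm.const_mul _)).aestronglyMeasurable
  · intro n
    refine hne.mono fun t ht => ?_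
    rw [norm_smul, norm_mul]
    have e1 : ‖Complex.exp (u n * gammaCurve θ ε t)‖ ≤ 1 := by
      rw [Complex.norm_exp, Complex.re_ofReal_mul, Real.exp_le_one_iff]
      exact mul_nonpos_of_nonneg_of_nonpos (hu n) (gamma_re_neg h0 h1 hε ht).le
    have e2 := hK _ (hc t)
    calc _ ≤ ‖k (gammaCurve θ ε t) * gammaDeriv θ ε t‖ * 1 * K := by gcongr
      _ = _ := by ring
  · refine ae_of_all _ fun t => ?_
    have e : Tendsto (fun n => Complex.exp (u n * gammaCurve θ ε t)) atTop (𝓝 1) := by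
      have h2 : Tendsto (fun n => ((u n : ℝ) : ℂ)) atTop (𝓝 ((0 : ℝ) : ℂ)) :=
        (Complex.continuous_ofReal.tendsto 0).comp hu0
      have h3 := (Complex.continuous_exp.tendsto _).comp (h2.mul_const (gammaCurve θ ε t))
      rw [Complex.ofReal_zero, zero_mul, Complex.exp_zero] at h3
      exact h3
    have := (e.const_mul (k (gammaCurve θ ε t) * gammaDeriv θ ε t)).smul_const (R (gammaCurve θ ε t))
    simpa using this

lemma dec_reg {f : ℂ → ℂ} (hf : MemHaInf f) {θ η : ℝ} (h0 : Real.pi / 2 < θ)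
    (h1 : θ < Real.pi) (hη : 0 < η) : ∃ M, Dec (fun z => f z * Complex.exp (η * z)) θ M := by
  obtain ⟨M, hM⟩ := hf.bdd
  have hM0 : 0 ≤ M := (norm_nonneg _).trans (hM (-1) (by simp))
  have hcos := cos_neg_of_gt h0 h1
  set a : ℝ := η * (-Real.cos θ) with ha
  have ha0 : 0 < a := mul_pos hη (by linarith)
  refine ⟨M * (1 + 2 / a ^ 2), ?_, by positivity, ?_⟩
  · exact hf.holo.mul (by fun_prop)
  · intro z hz hzr
    have hzn := norm_pos_iff.2 hz
    have hneg : z.re < 0 := lt_of_le_of_lt hzr (mul_neg_of_neg_of_pos hcos hzn)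
    have e1 := hM z hneg
    have e2 : ‖Complex.exp (η * z)‖ ≤ (1 + 2 / a ^ 2) * (1 + ‖z‖ ^ 2)⁻¹ := by
      rw [Complex.norm_exp, Complex.re_ofReal_mul]
      have q1 : η * z.re ≤ -(a * ‖z‖) := by
        have := mul_le_mul_of_nonneg_left hzr hη.le
        rw [ha]; linarith
      refine (Real.exp_le_exp.2 q1).trans ?_
      have q2 := Real.quadratic_le_exp_of_nonneg (mul_nonneg ha0.le hzn.le)
      rw [Real.exp_neg, ← div_eq_mul_inv, le_div_iff₀ (by positivity),
        inv_mul_le_iff₀ (Real.exp_pos _)]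
      have q3 : 1 + (a * ‖z‖) ^ 2 / 2 ≤ Real.exp (a * ‖z‖) := by
        have : 0 ≤ a * ‖z‖ := by positivity
        linarith
      refine le_trans ?_ (mul_le_mul_of_nonneg_right q3 (by positivity))
      have : (1 + (a * ‖z‖) ^ 2 / 2) * (1 + 2 / a ^ 2) = 1 + ‖z‖ ^ 2 + (a * ‖z‖) ^ 2 / 2 + 2 / a ^ 2 := by
        field_simp; ring
      rw [this]
      have : 0 ≤ (a * ‖z‖) ^ 2 / 2 + 2 / a ^ 2 := by positivity
      linarith
    rw [norm_mul, mul_assoc]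
    gcongr

lemma reg_mult {R : ℂ → X →L[ℂ] X} {δ r C : ℝ} (hR : IsPseudoResolvent R δ r C)
    {f g : ℂ → ℂ} {θ θ1 M N ε : ℝ} (hf : Dec f θ M) (hg : Dec g θ N) (h0 : Real.pi / 2 < θ)
    (h1 : θ < θ1) (h2 : θ1 < Real.pi / 2 + δ) (hε : 0 ≤ ε)
    (hc : ∀ t : ℝ, gammaCurve θ1 ε t ∈ resDom δ r) :
    (∫ t, (f (gammaCurve θ1 ε t) * gammaDeriv θ1 ε t) • R (gammaCurve θ1 ε t)) *
      (∫ t, (g (gammaCurve θ1 ε t) * gammaDeriv θ1 ε t) • R (gammaCurve θ1 ε t)) =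
    (2 * Real.pi * Complex.I : ℂ) • ∫ t, (f (gammaCurve θ1 ε t) * g (gammaCurve θ1 ε t) *
      gammaDeriv θ1 ε t) • R (gammaCurve θ1 ε t) := by
  have hδ := hR.hδ
  have h3 : θ1 < Real.pi := by linarith
  have hsw : ∀ (k : ℂ → ℂ) (φ e : ℝ),
      ∫ t, (k (gammaCurve φ e t) * gammaDeriv φ e t) • R (gammaCurve φ e t) =
      ∫ t, gammaDeriv φ e t • (k (gammaCurve φ e t) • R (gammaCurve φ e t)) := by
    intro k φ e
    refine integral_congr_ae (ae_of_all _ fun t => ?_)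
    simp only [smul_smul]
    rw [mul_comm]
  have hfg : Dec (fun z => f z * g z) θ (M * N) := by
    refine ⟨hf.holo.mul hg.holo, mul_nonneg hf.nn hg.nn, fun z hz hzr => ?_⟩
    have e1 := hf.dec z hz hzr
    have e2 := hg.dec z hz hzr
    have e3 : (1 + ‖z‖ ^ 2)⁻¹ ≤ 1 := inv_le_one_of_one_le₀ (by nlinarith [sq_nonneg ‖z‖])
    have e4 : 0 ≤ (1 + ‖z‖ ^ 2)⁻¹ := by positivity
    have m1 := hf.nn
    have m2 := hg.nn
    rw [norm_mul]
    calc _ ≤ (M * (1 + ‖z‖ ^ 2)⁻¹) * (N * 1) := by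
          gcongr
          exact e2.trans (by gcongr)
      _ = _ := by ring
  have hf1 := hf.mono h0 h1.le h3
  have hg1 := hg.mono h0 h1.le h3
  have hfg1 := hfg.mono h0 h1.le h3
  have h4 := h0.trans h1
  have hcore := core_mult hR hf hg h0 h1 h2
  rw [hsw f, hsw g, hsw (fun z => f z * g z), contour_eps hR hf1 h4 h2 hε hc,
    contour_eps hR hg1 h4 h2 hε hc, contour_eps hR hfg1 h4 h2 hε hc,
    ← contour_angle hR hg h0 h1.le h2, ← hsw f, ← hsw g, hcore, ← hsw (fun z => f z * g z),
    ← integral_smul]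
  refine integral_congr_ae (ae_of_all _ fun t => ?_)
  simp only [smul_smul]
  congr 1
  ring

lemma reg_mult_exp {R : ℂ → X →L[ℂ] X} {δ r C : ℝ} (hR : IsPseudoResolvent R δ r C)
    {f g : ℂ → ℂ} {θ θ1 M N ε v : ℝ} (hf : Dec (fun z => f z * Complex.exp (v * z)) θ M)
    (hg : Dec (fun z => g z * Complex.exp (v * z)) θ N) (h0 : Real.pi / 2 < θ)
    (h1 : θ < θ1) (h2 : θ1 < Real.pi / 2 + δ) (hε : 0 ≤ ε)
    (hc : ∀ t : ℝ, gammaCurve θ1 ε t ∈ resDom δ r) :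
    (∫ t, (f (gammaCurve θ1 ε t) * gammaDeriv θ1 ε t *
        Complex.exp (v * gammaCurve θ1 ε t)) • R (gammaCurve θ1 ε t)) *
      (∫ t, (g (gammaCurve θ1 ε t) * gammaDeriv θ1 ε t *
        Complex.exp (v * gammaCurve θ1 ε t)) • R (gammaCurve θ1 ε t)) =
      (2 * Real.pi * Complex.I : ℂ) • ∫ t, (f (gammaCurve θ1 ε t) * g (gammaCurve θ1 ε t) *
        gammaDeriv θ1 ε t * Complex.exp ((2 * v : ℝ) * gammaCurve θ1 ε t)) •
          R (gammaCurve θ1 ε t) := by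
  have h := reg_mult hR hf hg h0 h1 h2 hε hc
  have e1 : ∀ t, f (gammaCurve θ1 ε t) * gammaDeriv θ1 ε t * Complex.exp (v * gammaCurve θ1 ε t) =
      f (gammaCurve θ1 ε t) * Complex.exp (v * gammaCurve θ1 ε t) * gammaDeriv θ1 ε t :=
    fun t => by ring
  have e2 : ∀ t, g (gammaCurve θ1 ε t) * gammaDeriv θ1 ε t * Complex.exp (v * gammaCurve θ1 ε t) =
      g (gammaCurve θ1 ε t) * Complex.exp (v * gammaCurve θ1 ε t) * gammaDeriv θ1 ε t :=
    fun t => by ring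
  have e3 : ∀ t, f (gammaCurve θ1 ε t) * g (gammaCurve θ1 ε t) *
        gammaDeriv θ1 ε t * Complex.exp ((2 * v : ℝ) * gammaCurve θ1 ε t) =
      f (gammaCurve θ1 ε t) * Complex.exp (v * gammaCurve θ1 ε t) *
        (g (gammaCurve θ1 ε t) * Complex.exp (v * gammaCurve θ1 ε t)) * gammaDeriv θ1 ε t := by
    intro t
    have e : Complex.exp ((2 * v : ℝ) * gammaCurve θ1 ε t) =
        Complex.exp (v * gammaCurve θ1 ε t) * Complex.exp (v * gammaCurve θ1 ε t) := by
      rw [← Complex.exp_add]; congr 1; push_cast; ring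
    rw [e]; ring
  simp only [e1, e2, e3]
  exact h

end Core

lemma mult_unscaled (R : ℂ → X →L[ℂ] X) (δ r C : ℝ)
    (hR : IsPseudoResolvent R δ r C)
    (f g : ℂ → ℂ) (hf : MemHaInf f) (hg : MemHaInf g) (θ ε : ℝ)
    (hθ : Real.pi / 2 < θ) (hθ' : θ < Real.pi / 2 + δ) (hε : 0 ≤ ε)
    (hc : ∀ t : ℝ, gammaCurve θ ε t ∈ resDom δ r) :
    (∫ t : ℝ, (f (gammaCurve θ ε t) * gammaDeriv θ ε t) • R (gammaCurve θ ε t)) *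
      (∫ t : ℝ, (g (gammaCurve θ ε t) * gammaDeriv θ ε t) • R (gammaCurve θ ε t)) =
    (2 * Real.pi * Complex.I : ℂ) •
      ∫ t : ℝ, (f (gammaCurve θ ε t) * g (gammaCurve θ ε t) * gammaDeriv θ ε t) •
        R (gammaCurve θ ε t) := by
  have hδ := hR.hδ
  have hpi := Real.pi_pos
  have h3 : θ < Real.pi := by linarith
  set θ2 : ℝ := (Real.pi / 2 + θ) / 2 with hθ2
  have a0 : Real.pi / 2 < θ2 := by rw [hθ2]; linarith
  have a1 : θ2 < θ := by rw [hθ2]; linarith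
  have hne : ∀ᵐ t : ℝ, t ≠ 0 := by simp [ae_iff]
  have hfi := ha_integrable hf hθ h3 hε
  have hgi := ha_integrable hg hθ h3 hε
  have hfgi : Integrable (fun t => f (gammaCurve θ ε t) * g (gammaCurve θ ε t) * gammaDeriv θ ε t) := by
    obtain ⟨M, hM⟩ := hf.bdd
    refine Integrable.mono' (hgi.norm.const_mul M) ?_ (hne.mono fun t ht => ?_)
    · exact (aesm_comp (hf.holo.mul hg.holo).continuousOn meas_half (meas_curve θ ε)
        (hne.mono fun t ht => gamma_re_neg hθ h3 hε ht)).mul (meas_deriv θ ε).aestronglyMeasurable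
    · have := hM _ (gamma_re_neg hθ h3 hε ht)
      simp only [mul_assoc]
      rw [norm_mul]
      gcongr
  obtain ⟨u, u0, up⟩ : ∃ u : ℕ → ℝ, Tendsto u atTop (𝓝 0) ∧ ∀ n, 0 < u n :=
    ⟨fun n => 1 / ((n : ℝ) + 1), tendsto_one_div_add_atTop_nhds_zero_nat,
      fun n => Nat.one_div_pos_of_nat⟩
  have u2 : Tendsto (fun n => 2 * u n) atTop (𝓝 0) := by simpa using u0.const_mul 2
  have lf := gamma_limit hR hθ h3 hε hc hfi u (fun n => (up n).le) u0
  have lg := gamma_limit hR hθ h3 hε hc hgi u (fun n => (up n).le) u0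
  have lfg := gamma_limit (k := fun z => f z * g z) hR hθ h3 hε hc hfgi (fun n => 2 * u n)
    (fun n => mul_nonneg zero_le_two (up n).le) u2
  have l1 := lf.mul lg
  have l2 := lfg.const_smul (2 * Real.pi * Complex.I : ℂ)
  have heq : ∀ n : ℕ, (∫ t, (f (gammaCurve θ ε t) * gammaDeriv θ ε t *
        Complex.exp (u n * gammaCurve θ ε t)) • R (gammaCurve θ ε t)) *
      (∫ t, (g (gammaCurve θ ε t) * gammaDeriv θ ε t *
        Complex.exp (u n * gammaCurve θ ε t)) • R (gammaCurve θ ε t)) =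
      (2 * Real.pi * Complex.I : ℂ) • ∫ t, (f (gammaCurve θ ε t) * g (gammaCurve θ ε t) *
        gammaDeriv θ ε t * Complex.exp ((2 * u n : ℝ) * gammaCurve θ ε t)) •
          R (gammaCurve θ ε t) := by
    intro n
    obtain ⟨M, hM⟩ := dec_reg hf a0 (a1.trans h3) (up n)
    obtain ⟨N, hN⟩ := dec_reg hg a0 (a1.trans h3) (up n)
    exact reg_mult_exp hR hM hN a0 a1 hθ' hε hc
  exact tendsto_nhds_unique (l1.congr heq) l2

lemma scale_algebra (c : ℂ) (hc : c ≠ 0) (U V W : X →L[ℂ] X) (h : U * V = c • W) :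
    c⁻¹ • W = (c⁻¹ • U).comp (c⁻¹ • V) := by
  have h1 : (c⁻¹ • U).comp (c⁻¹ • V) = (c⁻¹ * c⁻¹) • (U * V) := by
    rw [← smul_mul_smul_comm]; rfl
  rw [h1, h, smul_smul, mul_assoc, inv_mul_cancel₀ hc, mul_one]

/-- multiplicativity of the holomorphic functional calculus:
for `f, g ∈ H_a^∞`, with `f(A) = (2πi)⁻¹ ∫_{Γ_{θ,ε}} f(λ) R(λ) dλ` over an
admissible contour, one has `(f·g)(A) = f(A) ∘ g(A)`. -/
theorem stmt11 (R : ℂ → X →L[ℂ] X) (δ r C : ℝ)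
    (hR : IsPseudoResolvent R δ r C)
    (f g : ℂ → ℂ) (hf : MemHaInf f) (hg : MemHaInf g) (θ ε : ℝ)
    (hθ : Real.pi / 2 < θ) (hθ' : θ < Real.pi / 2 + δ) (hε : 0 ≤ ε)
    (hc : ∀ t : ℝ, gammaCurve θ ε t ∈ resDom δ r) :
    (((2 * Real.pi : ℝ) : ℂ) * Complex.I)⁻¹ •
      (∫ t : ℝ, (f (gammaCurve θ ε t) * g (gammaCurve θ ε t) * gammaDeriv θ ε t) •
        R (gammaCurve θ ε t))
    = ((((2 * Real.pi : ℝ) : ℂ) * Complex.I)⁻¹ •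
        (∫ t : ℝ, (f (gammaCurve θ ε t) * gammaDeriv θ ε t) • R (gammaCurve θ ε t))).comp
      ((((2 * Real.pi : ℝ) : ℂ) * Complex.I)⁻¹ •
        (∫ t : ℝ, (g (gammaCurve θ ε t) * gammaDeriv θ ε t) • R (gammaCurve θ ε t))) := by
  have hpi := Real.pi_pos
  refine scale_algebra _ (by simp [hpi.ne']) _ _ _ ?_
  rw [mult_unscaled R δ r C hR f g hf hg θ ε hθ hθ' hε hc]
  congr 1
  push_cast
  rfl
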